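/- If Y ⊆ ℝ^k is a closed perfect set that is gap-rich (with some discrete exceptional set S ⊆ ℝ), then for generic y ∈ LP(ℤ,Y) (i.e., for every y in some dense Gδ subset of LP(ℤ,Y)), the spectrum of the discrete Schrödinger operator H_y is a Cantor set of zero Hausdorff dimension. -/

import Mathlib

/-!
For `0 < s` and `0 < η`, the potentials whose spectrum has `s`-dimensional Hausdorff content less
than `η` form an open set: the content is upper semicontinuous on compact sets, and the spectrum
moves by at most the size of a perturbation of the potential.  By Baire's theorem it suffices that
this set is dense and that the spectrum of a limit-periodic operator has no isolated points.

*Density.*  Energies near `S` cost no content.  By compactness, every other relevant energy is in a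
gap of one of finitely many periodic approximants `y i` of the given `x`.  Let `z` run through the
`y i` cyclically, following each of them for a block of length `L`.  If `e` is in the spectrum of
`H_z` and in a gap of `H_{y i}`, then by a Combes–Thomas estimate an approximate eigenvector of
`H_z` at `e` is exponentially small in `L` at the centres of the blocks that follow `y i`.  Removing
it there leaves a vector which satisfies Dirichlet conditions once per period of `z`, so `e` is
exponentially close to one of the Dirichlet eigenvalues, whose number is only linear in `L`.

*No isolated points.*  Translating a finitely supported approximate eigenvector at `e` by almost
periods far apart gives arbitrarily many orthonormal ones, whereas the eigenspace of `e` has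
dimension at most two.
-/

open Set MeasureTheory BoundedContinuousFunction

noncomputable section

/-- ℓ²(ℤ; ℝ). -/
abbrev Ell2 : Type := lp (fun _ : ℤ => ℝ) 2

/-- Spectrum of the discrete Schrödinger operator `H_W = Δ + W` on `ℓ²(ℤ)`:
`E` lies in the spectrum iff `H_W - E` is not a linear bijection of `ℓ²(ℤ)`
(for bounded `W`, by the open mapping theorem this is equivalent to `H_W - E`
not being boundedly invertible). -/
def SchrodingerSpectrum (W : ℤ → ℝ) : Set ℝ :=
  {E : ℝ | ¬ ∃ T : Ell2 ≃ₗ[ℝ] Ell2,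
      ∀ f : Ell2, ∀ n : ℤ,
        (T f) n = f (n - 1) + f (n + 1) + (W n - E) * f n}

/-- A Cantor set of zero Hausdorff dimension: nonempty, compact, without isolated
points, with empty interior, and of Hausdorff dimension zero. -/
def IsZeroDimCantor (s : Set ℝ) : Prop :=
  s.Nonempty ∧ IsCompact s ∧ Preperfect s ∧ interior s = ∅ ∧ dimH s = 0

/-- Periodic bounded sequences. -/
def IsPeriodicSeq {α : Type*} [PseudoMetricSpace α] (W : ℤ →ᵇ α) : Prop :=
  ∃ q : ℕ, 0 < q ∧ ∀ n : ℤ, W (n + q) = W n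

/-- The limit-periodic functions `ℤ → ℝ`: uniform limits of periodic functions. -/
def LPZ : Set (ℤ →ᵇ ℝ) := closure {W : ℤ →ᵇ ℝ | IsPeriodicSeq W}

/-- A subset of ℝ is discrete if it has no accumulation points. -/
def IsDiscreteSet (S : Set ℝ) : Prop := ∀ x : ℝ, ¬ AccPt x (Filter.principal S)

/-- Periodic extension `w^{♯ℤ}` of a finite word `w`. -/
def perExt {α : Type*} [Zero α] {m : ℕ} (w : Fin m → α) : ℤ → α :=
  fun n =>
    if h : 0 < m then
      w ⟨(n % (m : ℤ)).toNat, by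
        have h1 : 0 ≤ n % (m : ℤ) := Int.emod_nonneg n (by exact_mod_cast h.ne')
        have h2 : n % (m : ℤ) < (m : ℤ) := Int.emod_lt_of_pos n (by exact_mod_cast h)
        omega⟩
    else 0

/-- Aggregation `y^♮` of a sequence of blocks in `ℝ^k` into a potential `ℤ → ℝ`. -/
def agg (k : ℕ) (x : ℤ → (Fin k → ℝ)) : ℤ → ℝ :=
  fun n =>
    if h : 0 < k then
      x (Int.fdiv n k) ⟨(n % (k : ℤ)).toNat, by
        have h1 : 0 ≤ n % (k : ℤ) := Int.emod_nonneg n (by exact_mod_cast h.ne')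
        have h2 : n % (k : ℤ) < (k : ℤ) := Int.emod_lt_of_pos n (by exact_mod_cast h)
        omega⟩
    else 0

/-- `Y ⊆ ℝ^k` is gap-rich with exceptional set `S`: `S` is discrete and near any
word over `Y` there is a word over `Y` whose periodic Schrödinger operator has a
gap at any prescribed energy `E ∉ S`. -/
def GapRich (k : ℕ) (Y : Set (Fin k → ℝ)) (S : Set ℝ) : Prop :=
  IsDiscreteSet S ∧
  ∀ E : ℝ, E ∉ S → ∀ m : ℕ, 0 < m → ∀ x : Fin m → (Fin k → ℝ), (∀ i, x i ∈ Y) →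
    ∀ ε : ℝ, 0 < ε →
      ∃ l : ℕ, 0 < l ∧ ∃ y : Fin l → (Fin k → ℝ),
        (∀ i, y i ∈ Y) ∧
        (∀ j : ℤ, dist (perExt x j) (perExt y j) < ε) ∧
        E ∉ SchrodingerSpectrum (agg k (perExt y))

/-- The periodic elements of `Y^ℤ`. -/
def PerY (k : ℕ) (Y : Set (Fin k → ℝ)) : Set (ℤ →ᵇ (Fin k → ℝ)) :=
  {x | IsPeriodicSeq x ∧ ∀ n : ℤ, x n ∈ Y}

/-- The limit-periodic elements of `Y^ℤ`: uniform limits of periodic elements. -/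
def LPY (k : ℕ) (Y : Set (Fin k → ℝ)) : Set (ℤ →ᵇ (Fin k → ℝ)) := closure (PerY k Y)

section HausdorffContent

open scoped ENNReal NNReal

variable {X : Type*} [EMetricSpace X] {d : ℝ} {s : Set X}

/-- The `d`-dimensional Hausdorff content: the infimum of `∑ (diam t n) ^ d` over countable covers
`t` of a set, with no restriction on the diameters.  It has the same null sets as the Hausdorff
measure `μH[d]`, but is upper semicontinuous along compact sets. -/
def hausdorffContent (d : ℝ) : OuterMeasure X :=
  OuterMeasure.boundedBy fun s => Metric.ediam s ^ d

lemma hausdorffContent_le_ediam_rpow (d : ℝ) (s : Set X) :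
    hausdorffContent d s ≤ Metric.ediam s ^ d :=
  OuterMeasure.boundedBy_le s

lemma exists_cover_of_hausdorffContent_lt {η : ℝ≥0∞} (h : hausdorffContent d s < η) :
    ∃ t : ℕ → Set X, s ⊆ ⋃ n, t n ∧ ∑' n, ⨆ _ : (t n).Nonempty, Metric.ediam (t n) ^ d < η := by
  simpa only [hausdorffContent, OuterMeasure.boundedBy_apply, iInf_lt_iff, exists_prop] using h

lemma hausdorffContent_le_hausdorffMeasure [MeasurableSpace X] [BorelSpace X] :
    hausdorffContent d s ≤ μH[d] s := by
  rw [Measure.hausdorffMeasure_apply, hausdorffContent, OuterMeasure.boundedBy_apply]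
  refine le_iSup₂_of_le ⊤ ENNReal.zero_lt_top ?_
  simp only [le_top, implies_true, iInf_pos, le_refl]

lemma hausdorffMeasure_eq_zero_of_hausdorffContent [MeasurableSpace X] [BorelSpace X]
    (hd : 0 < d) (h : hausdorffContent d s = 0) : μH[d] s = 0 := by
  rw [Measure.hausdorffMeasure_apply, ← nonpos_iff_eq_zero]
  refine iSup₂_le fun r hr => le_of_forall_gt fun ε hε => ?_
  obtain ⟨t, hst, ht⟩ := exists_cover_of_hausdorffContent_lt
    (h.trans_lt (lt_min hε (ENNReal.rpow_pos_of_nonneg hr hd.le)))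
  have ediam_le (n) : Metric.ediam (t n) ≤ r := by
    rcases (t n).eq_empty_or_nonempty with hn | hn
    · simp [hn]
    · refine (ENNReal.rpow_le_rpow_iff hd).1 ?_
      calc Metric.ediam (t n) ^ d ≤ ⨆ _ : (t n).Nonempty, Metric.ediam (t n) ^ d :=
            le_iSup_of_le hn le_rfl
        _ ≤ ∑' n, ⨆ _ : (t n).Nonempty, Metric.ediam (t n) ^ d := ENNReal.le_tsum n
        _ ≤ r ^ d := ht.le.trans (min_le_right _ _)
  exact (iInf_le_of_le t (iInf₂_le_of_le hst ediam_le le_rfl)).trans_lt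
    (ht.trans_le (min_le_left _ _))

lemma dimH_eq_zero_of_hausdorffContent
    (h : ∀ n : ℕ, hausdorffContent (1 / (n + 1) : ℝ) s = 0) : dimH s = 0 := by
  borelize X
  refine nonpos_iff_eq_zero.1 <| ge_of_tendsto' (x := Filter.atTop)
    (f := fun n : ℕ => ((1 / (n + 1) : ℝ≥0) : ℝ≥0∞)) ?_ fun n => ?_
  · exact ENNReal.tendsto_coe.2 tendsto_one_div_add_atTop_nhds_zero_nat
  · refine dimH_le_of_hausdorffMeasure_ne_top ?_
    rw [hausdorffMeasure_eq_zero_of_hausdorffContent (by positivity) (by simpa using h n)]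
    exact ENNReal.zero_ne_top

lemma hausdorffContent_eq_zero_of_dimH (hs : dimH s = 0) (hd : 0 < d) :
    hausdorffContent d s = 0 := by
  borelize X
  lift d to ℝ≥0 using hd.le
  have h : μH[d] s = 0 := hausdorffMeasure_of_dimH_lt (by rw [hs]; exact_mod_cast hd)
  exact nonpos_iff_eq_zero.1 (h ▸ hausdorffContent_le_hausdorffMeasure)

lemma exists_isOpen_ediam_rpow_lt {η : ℝ≥0∞} (hd : 0 ≤ d) (h : Metric.ediam s ^ d < η) :
    ∃ U, IsOpen U ∧ s ⊆ U ∧ Metric.ediam U ^ d < η := by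
  have hcont : Continuous fun ε : ℝ≥0 => (Metric.ediam s + 2 * ε) ^ d :=
    ENNReal.continuous_rpow_const.comp <| continuous_const.add <|
      (ENNReal.continuous_const_mul ENNReal.ofNat_ne_top).comp ENNReal.continuous_coe
  have hnear : ∀ᶠ ε : ℝ≥0 in nhdsWithin 0 (Ioi 0), (Metric.ediam s + 2 * ε) ^ d < η :=
    nhdsWithin_le_nhds (hcont.continuousAt.eventually_lt_const (by simpa using h))
  obtain ⟨ε, hε, hpos⟩ := (hnear.and self_mem_nhdsWithin).exists
  exact ⟨Metric.thickening ε s, Metric.isOpen_thickening,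
    Metric.self_subset_thickening (NNReal.coe_pos.2 hpos) s,
    (ENNReal.rpow_le_rpow (Metric.ediam_thickening_le ε) hd).trans_lt hε⟩

lemma exists_isOpen_hausdorffContent_lt {η : ℝ≥0∞} (hd : 0 ≤ d) (h : hausdorffContent d s < η) :
    ∃ U, IsOpen U ∧ s ⊆ U ∧ hausdorffContent d U < η := by
  obtain ⟨t, hst, ht⟩ := exists_cover_of_hausdorffContent_lt h
  obtain ⟨ε, hε, hsum⟩ := ENNReal.exists_pos_sum_of_countable' (tsub_pos_of_lt ht).ne' ℕ
  have thicken (n) : ∃ U, IsOpen U ∧ t n ⊆ U ∧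
      hausdorffContent d U ≤ (⨆ _ : (t n).Nonempty, Metric.ediam (t n) ^ d) + ε n := by
    rcases (t n).eq_empty_or_nonempty with hn | hn
    · exact ⟨∅, isOpen_empty, hn.le, by simp⟩
    · have htop : Metric.ediam (t n) ^ d ≠ ∞ := by
        simpa only [hn, iSup_pos] using ENNReal.ne_top_of_tsum_ne_top ht.ne_top n
      obtain ⟨U, hU, htU, hUε⟩ :=
        exists_isOpen_ediam_rpow_lt hd (ENNReal.lt_add_right htop (hε n).ne')
      exact ⟨U, hU, htU, (hausdorffContent_le_ediam_rpow d U).trans (by simpa [hn] using hUε.le)⟩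
  choose U hU htU hUε using thicken
  refine ⟨⋃ n, U n, isOpen_iUnion hU, hst.trans (iUnion_mono htU), ?_⟩
  calc hausdorffContent d (⋃ n, U n)
      ≤ ∑' n, ((⨆ _ : (t n).Nonempty, Metric.ediam (t n) ^ d) + ε n) :=
        (measure_iUnion_le U).trans (ENNReal.tsum_le_tsum hUε)
    _ < η := by
        rw [ENNReal.tsum_add]
        exact lt_tsub_iff_left.1 hsum

lemma hausdorffContent_thickening_finset_le {X : Type*} [MetricSpace X] {d : ℝ} (hd : 0 ≤ d)
    (Λ : Finset X) (r : ℝ) :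
    hausdorffContent d (Metric.thickening r (Λ : Set X)) ≤
      Λ.card * (2 * ENNReal.ofReal r) ^ d := by
  rw [Metric.thickening_eq_biUnion_ball]
  calc hausdorffContent d (⋃ x ∈ Λ, Metric.ball x r)
      ≤ ∑ x ∈ Λ, hausdorffContent d (Metric.ball x r) := measure_biUnion_finset_le _ _
    _ ≤ ∑ _x ∈ Λ, (2 * ENNReal.ofReal r) ^ d := by
      refine Finset.sum_le_sum fun x _ => (hausdorffContent_le_ediam_rpow _ _).trans ?_
      rw [← Metric.eball_ofReal]
      gcongr
      exact Metric.ediam_eball_le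
    _ = _ := by rw [Finset.sum_const, nsmul_eq_mul]

lemma interior_eq_empty_of_dimH_eq_zero {s : Set ℝ} (hs : dimH s = 0) : interior s = ∅ := by
  by_contra! h
  have := Real.dimH_of_mem_nhds (mem_interior_iff_mem_nhds.1 h.some_mem)
  simp [hs] at this

end HausdorffContent

section SelfAdjoint

open scoped RealInnerProductSpace

variable {H : Type*} [NormedAddCommGroup H] [InnerProductSpace ℝ H] {T T' : H →L[ℝ] H}

lemma exists_mul_norm_le_of_isUnit (hT : IsUnit T) : ∃ c > 0, ∀ f, c * ‖f‖ ≤ ‖T f‖ := by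
  obtain ⟨u, rfl⟩ := hT
  refine ⟨(‖(↑u⁻¹ : H →L[ℝ] H)‖ + 1)⁻¹, by positivity, fun f => ?_⟩
  rw [inv_mul_le_iff₀ (by positivity)]
  calc ‖f‖ = ‖(↑u⁻¹ : H →L[ℝ] H) ((u : H →L[ℝ] H) f)‖ := by
        rw [← mul_apply_eq_comp, Units.inv_mul, one_apply_eq_self]
    _ ≤ ‖(↑u⁻¹ : H →L[ℝ] H)‖ * ‖(u : H →L[ℝ] H) f‖ := ContinuousLinearMap.le_opNorm _ _
    _ ≤ (‖(↑u⁻¹ : H →L[ℝ] H)‖ + 1) * ‖(u : H →L[ℝ] H) f‖ := by gcongr; linarith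

lemma exists_mul_norm_le_of_notMem_spectrum {e : ℝ} (he : e ∉ spectrum ℝ T) :
    ∃ c > 0, ∀ f, c * ‖f‖ ≤ ‖T f - e • f‖ := by
  rw [spectrum.notMem_iff, ← IsUnit.neg_iff, neg_sub, Algebra.algebraMap_eq_smul_one] at he
  exact exists_mul_norm_le_of_isUnit he

variable [CompleteSpace H]

lemma isUnit_of_mul_norm_le (hT : IsSelfAdjoint T) {c : ℝ} (hc : 0 < c)
    (h : ∀ f, c * ‖f‖ ≤ ‖T f‖) : IsUnit T := by
  lift c to NNReal using hc.le
  rw [← isUnit_pow_iff two_ne_zero, sq]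
  refine ContinuousLinearMap.isUnit_of_forall_le_norm_inner_map (T * T)
    (pow_pos (NNReal.coe_pos.1 hc) 2) fun f => ?_
  calc ‖f‖ ^ 2 * (c ^ 2 : NNReal) = (c * ‖f‖) ^ 2 := by push_cast; ring
    _ ≤ ‖T f‖ ^ 2 := by gcongr; exact h f
    _ = ⟪T (T f), f⟫ := by rw [hT.isSymmetric.apply_clm, real_inner_self_eq_norm_sq]
    _ ≤ ‖⟪T (T f), f⟫‖ := le_abs_self _

lemma isSelfAdjoint_sub_smul_one (hT : IsSelfAdjoint T) (e : ℝ) : IsSelfAdjoint (T - e • 1) :=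
  hT.sub (.smul (.all e) (.one _))

lemma notMem_spectrum_of_mul_norm_le (hT : IsSelfAdjoint T) {c e : ℝ} (hc : 0 < c)
    (h : ∀ f, c * ‖f‖ ≤ ‖T f - e • f‖) : e ∉ spectrum ℝ T := by
  rw [spectrum.notMem_iff, ← IsUnit.neg_iff, neg_sub, Algebra.algebraMap_eq_smul_one]
  exact isUnit_of_mul_norm_le (isSelfAdjoint_sub_smul_one hT e) hc h

lemma norm_mem_spectrum_or_neg_norm_mem_spectrum [Nontrivial H] (hT : IsSelfAdjoint T) :
    ‖T‖ ∈ spectrum ℝ T ∨ -‖T‖ ∈ spectrum ℝ T := by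
  by_contra! h
  obtain ⟨c₁, hc₁, h₁⟩ := exists_mul_norm_le_of_notMem_spectrum h.1
  obtain ⟨c₂, hc₂, h₂⟩ := exists_mul_norm_le_of_notMem_spectrum h.2
  set N := ‖T‖
  set c := c₂ * c₁
  have hc : 0 < c := by positivity
  -- `T ^ 2 - N ^ 2` is bounded below, which makes `N * T` smaller than `N ^ 2`
  have hlower (f) : c * ‖f‖ ≤ ‖T (T f) - N ^ 2 • f‖ := by
    calc c * ‖f‖ = c₂ * (c₁ * ‖f‖) := mul_assoc _ _ _
      _ ≤ c₂ * ‖T f - N • f‖ := by gcongr; exact h₁ f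
      _ ≤ ‖T (T f - N • f) - (-N) • (T f - N • f)‖ := h₂ _
      _ = ‖T (T f) - N ^ 2 • f‖ := by
        congr 1; simp only [map_sub, map_smul]; module
  have hsq (f) : ‖(N • T) f‖ ^ 2 ≤ (N ^ 4 - c ^ 2) * ‖f‖ ^ 2 := by
    have hinner : ⟪T (T f), f⟫ = ‖T f‖ ^ 2 := by
      rw [hT.isSymmetric.apply_clm, real_inner_self_eq_norm_sq]
    have hupper : ‖T (T f)‖ ^ 2 ≤ (N * ‖T f‖) ^ 2 := by gcongr; exact T.le_opNorm _
    have hexp : (c * ‖f‖) ^ 2 ≤ ‖T (T f) - N ^ 2 • f‖ ^ 2 := by gcongr; exact hlower f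
    rw [norm_sub_sq_real, inner_smul_right, hinner, norm_smul, norm_pow, norm_norm] at hexp
    rw [_root_.smul_apply, norm_smul, norm_norm]
    linarith
  obtain ⟨f, hf⟩ := exists_ne (0 : H)
  have hnonneg : 0 ≤ N ^ 4 - c ^ 2 :=
    nonneg_of_mul_nonneg_left ((sq_nonneg _).trans (hsq f)) (by positivity)
  have hnorm : ‖N • T‖ ≤ √(N ^ 4 - c ^ 2) :=
    ContinuousLinearMap.opNorm_le_bound _ (Real.sqrt_nonneg _) fun f => by
      rw [← Real.sqrt_sq (norm_nonneg f), ← Real.sqrt_mul hnonneg]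
      exact Real.le_sqrt_of_sq_le (hsq f)
  rw [norm_smul, norm_norm, Real.le_sqrt (by positivity) hnonneg] at hnorm
  nlinarith [pow_pos hc 2]

lemma spectrum_nonempty [Nontrivial H] (hT : IsSelfAdjoint T) : (spectrum ℝ T).Nonempty :=
  (norm_mem_spectrum_or_neg_norm_mem_spectrum hT).elim (fun h => ⟨_, h⟩) fun h => ⟨_, h⟩

lemma mul_norm_le_norm_apply_of_spectrum (hT : IsSelfAdjoint T) {d : ℝ}
    (h : ∀ t ∈ spectrum ℝ T, d ≤ |t|) (f : H) : d * ‖f‖ ≤ ‖T f‖ := by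
  rcases le_or_gt d 0 with hd | hd
  · exact (mul_nonpos_of_nonpos_of_nonneg hd (norm_nonneg f)).trans (norm_nonneg _)
  rcases subsingleton_or_nontrivial H with hH | hH
  · simp [Subsingleton.elim f 0]
  have hunit : IsUnit T := by
    rw [← spectrum.zero_notMem_iff ℝ]
    exact fun h0 => by simpa [hd.not_ge] using h 0 h0
  obtain ⟨u, rfl⟩ := hunit
  have hinv : IsSelfAdjoint (↑u⁻¹ : H →L[ℝ] H) := by
    rw [← Ring.inverse_unit]; exact hT.ringInverse
  have hle : d * ‖(↑u⁻¹ : H →L[ℝ] H)‖ ≤ 1 := by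
    have inv_norm_le {t : ℝ} (ht : t ∈ spectrum ℝ (↑u⁻¹ : H →L[ℝ] H)) : d * |t| ≤ 1 := by
      rw [← spectrum.map_inv, Set.mem_inv] at ht
      have ht0 := spectrum.ne_zero_of_mem_of_unit ht
      rw [← le_div_iff₀ (abs_pos.2 (by simpa using ht0)), one_div, ← abs_inv]
      exact h _ ht
    rcases norm_mem_spectrum_or_neg_norm_mem_spectrum hinv with h1 | h1 <;>
      simpa using inv_norm_le h1
  calc d * ‖f‖ = d * ‖(↑u⁻¹ : H →L[ℝ] H) ((u : H →L[ℝ] H) f)‖ := by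
        rw [← mul_apply_eq_comp, Units.inv_mul, one_apply_eq_self]
    _ ≤ d * (‖(↑u⁻¹ : H →L[ℝ] H)‖ * ‖(u : H →L[ℝ] H) f‖) := by
        gcongr; exact ContinuousLinearMap.le_opNorm _ _
    _ ≤ ‖(u : H →L[ℝ] H) f‖ := by
        rw [← mul_assoc]; exact mul_le_of_le_one_left (norm_nonneg _) hle

lemma mul_norm_le_norm_apply_sub_smul (hT : IsSelfAdjoint T) {d e : ℝ}
    (h : ∀ t ∈ spectrum ℝ T, d ≤ dist e t) (f : H) : d * ‖f‖ ≤ ‖T f - e • f‖ := by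
  refine mul_norm_le_norm_apply_of_spectrum (isSelfAdjoint_sub_smul_one hT e) (fun t ht => ?_) f
  rw [← Algebra.algebraMap_eq_smul_one, ← spectrum.sub_singleton_eq, Set.sub_singleton] at ht
  obtain ⟨s, hs, rfl⟩ := ht
  rw [← Real.dist_eq, dist_comm]
  exact h s hs

lemma spectrum_subset_thickening (hT : IsSelfAdjoint T) (hT' : IsSelfAdjoint T') {δ : ℝ}
    (h : ‖T' - T‖ < δ) : spectrum ℝ T' ⊆ Metric.thickening δ (spectrum ℝ T) := by
  intro e he
  by_contra hfar
  simp only [Metric.mem_thickening_iff, not_exists, not_and, not_lt] at hfar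
  refine notMem_spectrum_of_mul_norm_le hT' (sub_pos.2 h) (fun f => ?_) he
  have h1 := mul_norm_le_norm_apply_sub_smul hT hfar f
  have h2 : ‖T f - e • f‖ ≤ ‖T' f - e • f‖ + ‖(T' - T) f‖ := by
    calc ‖T f - e • f‖ = ‖T' f - e • f - (T' - T) f‖ := by rw [_root_.sub_apply]; congr 1; abel
      _ ≤ _ := norm_sub_le _ _
  have h3 := (T' - T).le_opNorm f
  linarith

lemma mul_abs_inner_le_sq_norm (hT : IsSelfAdjoint T) {r : ℝ}
    (h : ∀ t ∈ spectrum ℝ T, t ≠ 0 → r ≤ |t|) (f : H) : r * |⟪T f, f⟫| ≤ ‖T f‖ ^ 2 := by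
  -- for `|s| ≤ r / 2` the spectrum is no closer to `s` than the point `0` is
  have hshift {s : ℝ} (hs : |s| ≤ r / 2) : 2 * s * ⟪T f, f⟫ ≤ ‖T f‖ ^ 2 := by
    have hdist : ∀ t ∈ spectrum ℝ T, |s| ≤ dist s t := by
      intro t ht
      rcases eq_or_ne t 0 with rfl | ht0
      · simp
      · have := h t ht ht0
        rw [Real.dist_eq, abs_sub_comm]
        linarith [abs_sub_abs_le_abs_sub t s]
    have hsq : (|s| * ‖f‖) ^ 2 ≤ ‖T f - s • f‖ ^ 2 := by
      gcongr; exact mul_norm_le_norm_apply_sub_smul hT hdist f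
    rw [norm_sub_sq_real, norm_smul, Real.norm_eq_abs, inner_smul_right] at hsq
    linarith
  rcases le_total 0 r with hr | hr
  · rcases abs_cases ⟪T f, f⟫ with ⟨hx, -⟩ | ⟨hx, -⟩ <;> rw [hx]
    · linarith [hshift (s := r / 2) (abs_of_nonneg (by positivity)).le]
    · linarith [hshift (s := -(r / 2)) (by rw [abs_neg, abs_of_nonneg (by positivity)])]
  · exact (mul_nonpos_of_nonpos_of_nonneg hr (abs_nonneg _)).trans (sq_nonneg _)

lemma mul_norm_apply_le_norm_apply_apply (hT : IsSelfAdjoint T) {r : ℝ}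
    (h : ∀ t ∈ spectrum ℝ T, t ≠ 0 → r ≤ |t|) (f : H) : r * ‖T f‖ ≤ ‖T (T f)‖ := by
  rcases le_total r 0 with hr | hr
  · exact (mul_nonpos_of_nonpos_of_nonneg hr (norm_nonneg _)).trans (norm_nonneg _)
  have hsymm : ⟪T (T f), f⟫ = ‖T f‖ ^ 2 := by
    rw [hT.isSymmetric.apply_clm, real_inner_self_eq_norm_sq]
  -- `2 T² (T² - r²) = (T - r) (T² + r T) (T - r) + (T + r) (T² - r T) (T + r)`
  have hsub : r * -⟪T (T f - r • f), T f - r • f⟫ ≤ ‖T (T f - r • f)‖ ^ 2 :=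
    (mul_le_mul_of_nonneg_left (neg_le_abs _) hr).trans (mul_abs_inner_le_sq_norm hT h _)
  have hadd : r * ⟪T (T f + r • f), T f + r • f⟫ ≤ ‖T (T f + r • f)‖ ^ 2 :=
    (mul_le_mul_of_nonneg_left (le_abs_self _) hr).trans (mul_abs_inner_le_sq_norm hT h _)
  simp only [map_sub, map_add, map_smul, norm_sub_sq_real, norm_add_sq_real, norm_smul,
    Real.norm_eq_abs, mul_pow, sq_abs, inner_sub_left, inner_sub_right, inner_add_left,
    inner_add_right, real_inner_smul_left, real_inner_smul_right, hsymm,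
    real_inner_self_eq_norm_sq] at hsub hadd
  refine abs_le_of_sq_le_sq' ?_ (norm_nonneg _) |>.2
  linarith

lemma mul_norm_le_of_mem_orthogonal_ker (hT : IsSelfAdjoint T) {r : ℝ}
    (h : ∀ t ∈ spectrum ℝ T, t ≠ 0 → r ≤ |t|) {g : H} (hg : g ∈ T.kerᗮ) :
    r * ‖g‖ ≤ ‖T g‖ := by
  have hclosed : IsClosed {g | r * ‖g‖ ≤ ‖T g‖} := isClosed_le (by fun_prop) (by fun_prop)
  rw [← hT.isSymmetric.orthogonal_range, Submodule.orthogonal_orthogonal_eq_closure] at hg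
  refine closure_minimal ?_ hclosed hg
  rintro _ ⟨f, rfl⟩
  exact mul_norm_apply_le_norm_apply_apply hT h f

omit [CompleteSpace H] in
lemma exists_mem_orthogonal_norm_apply_le {ι : Type*} [Fintype ι] (K : Submodule ℝ H)
    [FiniteDimensional ℝ K] (hK : Module.finrank ℝ K < Fintype.card ι) {G : ι → H}
    (hG : Orthonormal ℝ G) {δ : ℝ} (hδ : ∀ i, ‖T (G i)‖ ≤ δ) :
    ∃ g ∈ Kᗮ, g ≠ 0 ∧ ‖T g‖ ≤ Fintype.card ι * δ * ‖g‖ := by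
  let P : (ι → ℝ) →ₗ[ℝ] K := K.orthogonalProjectionOnto ∘ₗ Fintype.linearCombination ℝ G
  obtain ⟨a, haP, ha⟩ := P.ker.ne_bot_iff.1 (P.ker_ne_bot_of_finrank_lt (by simpa using hK))
  set g := Fintype.linearCombination ℝ G a
  have hgK : g ∈ Kᗮ := Submodule.orthogonalProjectionOnto_eq_zero_iff.1 haP
  have ha_le (i) : |a i| ≤ ‖g‖ := by
    calc |a i| = |⟪G i, g⟫| := by
          rw [show g = ∑ i, a i • G i from Fintype.linearCombination_apply ℝ G a,
            hG.inner_right_fintype]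
      _ ≤ ‖G i‖ * ‖g‖ := abs_real_inner_le_norm _ _
      _ = ‖g‖ := by rw [hG.norm_eq_one, one_mul]
  refine ⟨g, hgK, fun hg => ha (funext fun i => by simpa [hg] using ha_le i), ?_⟩
  calc ‖T g‖ = ‖∑ i, a i • T (G i)‖ := by
        rw [show g = ∑ i, a i • G i from Fintype.linearCombination_apply ℝ G a, map_sum]
        simp only [map_smul]
    _ ≤ ∑ _i : ι, ‖g‖ * δ := norm_sum_le_of_le _ fun i _ => by
        rw [norm_smul]; gcongr; exacts [ha_le i, hδ i]
    _ = Fintype.card ι * δ * ‖g‖ := by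
        rw [Finset.sum_const, Finset.card_univ, nsmul_eq_mul]; ring

/-- Weyl's criterion for the essential spectrum, in a form that only needs finitely many
approximate eigenvectors: infinitely many orthonormal ones do not fit into a finite-dimensional
kernel. -/
lemma exists_mem_spectrum_ne_zero_of_orthonormal (hT : IsSelfAdjoint T)
    [FiniteDimensional ℝ T.ker]
    (h : ∀ δ > 0, ∀ m, ∃ G : Fin m → H, Orthonormal ℝ G ∧ ∀ i, ‖T (G i)‖ ≤ δ) {r : ℝ} (hr : 0 < r) :
    ∃ t ∈ spectrum ℝ T, t ≠ 0 ∧ |t| < r := by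
  by_contra! hgap
  set m := Module.finrank ℝ T.ker + 1
  obtain ⟨G, hG, hTG⟩ := h (r / (2 * m)) (by positivity) m
  obtain ⟨g, hgK, hg0, hTg⟩ := exists_mem_orthogonal_norm_apply_le T.ker (by simp [m]) hG hTG
  have hlower := mul_norm_le_of_mem_orthogonal_ker hT hgap hgK
  have hg := norm_pos_iff.2 hg0
  have hm : (m : ℝ) ≠ 0 := Nat.cast_ne_zero.2 (Nat.succ_ne_zero _)
  have hhalf : Fintype.card (Fin m) * (r / (2 * m)) = r / 2 := by
    rw [Fintype.card_fin]; field_simp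
  rw [hhalf] at hTg
  nlinarith

end SelfAdjoint

namespace Ell2

open scoped RealInnerProductSpace

variable {f g : Ell2} {W W' : ℤ →ᵇ ℝ}

lemma hasSum_inner (f g : Ell2) : HasSum (fun n => f n * g n) ⟪f, g⟫ := by
  simpa [mul_comm] using lp.hasSum_inner (𝕜 := ℝ) f g

lemma hasSum_sq (f : Ell2) : HasSum (fun n => f n ^ 2) (‖f‖ ^ 2) := by
  simpa only [sq, ← real_inner_self_eq_norm_mul_norm] using hasSum_inner f f

lemma norm_le_mul_norm {C : ℝ} (hC : 0 ≤ C) (h : ∀ n, |g n| ≤ C * |f n|) : ‖g‖ ≤ C * ‖f‖ := by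
  refine abs_le_of_sq_le_sq' ?_ (by positivity) |>.2
  rw [mul_pow]
  refine hasSum_le (fun n => ?_) (hasSum_sq g) ((hasSum_sq f).mul_left (C ^ 2))
  simpa only [mul_pow, sq_abs] using pow_le_pow_left₀ (abs_nonneg _) (h n) 2

/-- The element of `ℓ²(ℤ)` given by a square-summable sequence. -/
def ofSummable (g : ℤ → ℝ) (hg : Summable fun n => g n ^ 2) : Ell2 :=
  ⟨g, memℓp_gen (by simpa using hg)⟩

lemma ofSummable_apply (g : ℤ → ℝ) (hg : Summable fun n => g n ^ 2) (n : ℤ) :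
    ofSummable g hg n = g n := rfl

lemma hasSum_sq_add (f : Ell2) (c : ℤ) : HasSum (fun n => f (n + c) ^ 2) (‖f‖ ^ 2) :=
  (Equiv.addRight c).hasSum_iff (f := fun n => f n ^ 2) |>.2 (hasSum_sq f)

/-- Translation `f ↦ f (· + c)` of `ℓ²(ℤ)`. -/
def shift (c : ℤ) : Ell2 →ₗᵢ[ℝ] Ell2 where
  toFun f := ofSummable (fun n => f (n + c)) (hasSum_sq_add f c).summable
  map_add' _ _ := rfl
  map_smul' _ _ := rfl
  norm_map' f := (sq_eq_sq₀ (norm_nonneg _) (norm_nonneg _)).1 <|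
    (hasSum_sq (ofSummable _ (hasSum_sq_add f c).summable)).unique (hasSum_sq_add f c)

lemma shift_apply (c : ℤ) (f : Ell2) (n : ℤ) : shift c f n = f (n + c) := rfl

lemma inner_shift (c : ℤ) (f g : Ell2) : ⟪shift c f, g⟫ = ⟪f, shift (-c) g⟫ := by
  refine (hasSum_inner (shift c f) g).unique ?_
  convert (Equiv.addRight c).hasSum_iff.2 (hasSum_inner f (shift (-c) g)) using 2 with n
  simp [shift_apply]

/-- Multiplication of `ℓ²(ℤ)` by bounded sequences. -/
def mulL : (ℤ →ᵇ ℝ) →L[ℝ] Ell2 →L[ℝ] Ell2 :=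
  LinearMap.mkContinuous₂
    (LinearMap.mk₂ ℝ
      (fun W f => ofSummable (fun n => W n * f n) <|
        .of_nonneg_of_le (fun n => sq_nonneg _)
          (fun n => by
            rw [mul_pow, ← sq_abs (W n)]; gcongr; exact W.norm_coe_le_norm n)
          ((hasSum_sq f).summable.mul_left (‖W‖ ^ 2)))
      (fun W W' f => lp.ext <| funext fun n => add_mul (W n) (W' n) (f n))
      (fun c W f => lp.ext <| funext fun n => mul_assoc c (W n) (f n))
      (fun W f g => lp.ext <| funext fun n => mul_add (W n) (f n) (g n))
      (fun c W f => lp.ext <| funext fun n => mul_left_comm (W n) c (f n)))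
    1 fun W f => by
      rw [one_mul]
      refine norm_le_mul_norm (norm_nonneg W) fun n => ?_
      rw [LinearMap.mk₂_apply, ofSummable_apply, abs_mul]
      gcongr
      exact W.norm_coe_le_norm n

lemma mulL_apply (W : ℤ →ᵇ ℝ) (f : Ell2) (n : ℤ) : mulL W f n = W n * f n := rfl

lemma norm_mulL_le (W : ℤ →ᵇ ℝ) : ‖mulL W‖ ≤ ‖W‖ :=
  ContinuousLinearMap.opNorm_le_bound _ (norm_nonneg W) fun f =>
    norm_le_mul_norm (norm_nonneg W) fun n => by
      rw [mulL_apply, abs_mul]; gcongr; exact W.norm_coe_le_norm n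

/-- The Schrödinger operator `Δ + W` on `ℓ²(ℤ)`. -/
def schrodinger (W : ℤ →ᵇ ℝ) : Ell2 →L[ℝ] Ell2 :=
  (shift (-1)).toContinuousLinearMap + (shift 1).toContinuousLinearMap + mulL W

lemma schrodinger_apply (W : ℤ →ᵇ ℝ) (f : Ell2) (n : ℤ) :
    schrodinger W f n = f (n - 1) + f (n + 1) + W n * f n := by
  simp [schrodinger, shift_apply, mulL_apply, sub_eq_add_neg]

lemma isSelfAdjoint_schrodinger (W : ℤ →ᵇ ℝ) : IsSelfAdjoint (schrodinger W) := by
  refine ContinuousLinearMap.isSelfAdjoint_iff_isSymmetric.2 fun f g => ?_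
  have hmul : ⟪mulL W f, g⟫ = ⟪f, mulL W g⟫ := by
    refine (hasSum_inner (mulL W f) g).unique ?_
    convert hasSum_inner f (mulL W g) using 2 with n
    rw [mulL_apply, mulL_apply]; ring
  simp only [schrodinger, ContinuousLinearMap.coe_coe, _root_.add_apply, inner_add_left,
    inner_add_right, hmul, LinearIsometry.coe_toContinuousLinearMap, inner_shift, neg_neg]
  ring

lemma schrodinger_sub_schrodinger (W W' : ℤ →ᵇ ℝ) :
    schrodinger W - schrodinger W' = mulL (W - W') := by
  rw [schrodinger, schrodinger, add_sub_add_left_eq_sub, map_sub]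

lemma schrodingerSpectrum_eq_spectrum (W : ℤ →ᵇ ℝ) :
    SchrodingerSpectrum W = spectrum ℝ (schrodinger W) := by
  ext E
  rw [spectrum.mem_iff, ← IsUnit.neg_iff, neg_sub, Algebra.algebraMap_eq_smul_one,
    ContinuousLinearMap.isUnit_iff_bijective, SchrodingerSpectrum, mem_ofPred_eq, not_iff_not]
  have hformula (f : Ell2) (n : ℤ) :
      (schrodinger W - E • 1) f n = f (n - 1) + f (n + 1) + (W n - E) * f n := by
    change schrodinger W f n - E * f n = _
    rw [schrodinger_apply]; ring
  constructor
  · rintro ⟨T, hT⟩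
    have : ⇑(schrodinger W - E • 1) = T :=
      funext fun f => lp.ext <| funext fun n => (hformula f n).trans (hT f n).symm
    exact this ▸ T.bijective
  · exact fun h => ⟨.ofBijective (schrodinger W - E • 1 : Ell2 →L[ℝ] Ell2).toLinearMap h, hformula⟩

instance finiteDimensional_ker_schrodinger (W : ℤ →ᵇ ℝ) (E : ℝ) :
    FiniteDimensional ℝ (schrodinger W - E • 1).ker := by
  let initial : Ell2 →ₗ[ℝ] ℝ × ℝ :=
    (lp.evalₗ (𝕜 := ℝ) (fun _ : ℤ => ℝ) 2 0).prod (lp.evalₗ (fun _ : ℤ => ℝ) 2 1)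
  refine FiniteDimensional.of_injective (initial.domRestrict (schrodinger W - E • 1).ker) ?_
  rw [← LinearMap.ker_eq_bot, LinearMap.ker_eq_bot']
  rintro ⟨f, hf⟩ h
  have hrec (n : ℤ) : f (n - 1) + f (n + 1) + W n * f n = E * f n := by
    exact (schrodinger_apply W f n).symm.trans (congrArg (fun g : Ell2 => g n) (sub_eq_zero.1 hf))
  have hzero (n : ℤ) : f n = 0 ∧ f (n + 1) = 0 := by
    induction n using Int.induction_on with
    | zero => exact ⟨congrArg Prod.fst h, congrArg Prod.snd h⟩
    | succ n ih => exact ⟨ih.2, by simpa [ih.1, ih.2] using hrec (n + 1)⟩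
    | pred n ih => exact ⟨by simpa [ih.1, ih.2] using hrec (-n), by simpa using ih.1⟩
  ext n
  exact (hzero n).1

end Ell2

section Spectrum

open Ell2

variable {W W' : ℤ →ᵇ ℝ}

lemma isCompact_schrodingerSpectrum (W : ℤ →ᵇ ℝ) : IsCompact (SchrodingerSpectrum W) := by
  rw [schrodingerSpectrum_eq_spectrum]
  exact spectrum.isCompact _

lemma schrodingerSpectrum_nonempty (W : ℤ →ᵇ ℝ) : (SchrodingerSpectrum W).Nonempty := by
  rw [schrodingerSpectrum_eq_spectrum]
  have : Nontrivial Ell2 := ⟨lp.single 2 0 (1 : ℝ), 0, fun h => by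
    simpa using congrArg (fun f : Ell2 => f 0) h⟩
  exact spectrum_nonempty (isSelfAdjoint_schrodinger W)

lemma schrodingerSpectrum_subset_thickening {δ : ℝ} (h : ‖W - W'‖ < δ) :
    SchrodingerSpectrum W ⊆ Metric.thickening δ (SchrodingerSpectrum W') := by
  simp only [schrodingerSpectrum_eq_spectrum]
  refine spectrum_subset_thickening (isSelfAdjoint_schrodinger W') (isSelfAdjoint_schrodinger W) ?_
  rw [schrodinger_sub_schrodinger]
  exact (norm_mulL_le _).trans_lt h

lemma mul_norm_le_norm_schrodinger_sub {d e : ℝ} (h : ∀ t ∈ SchrodingerSpectrum W, d ≤ dist e t)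
    (f : Ell2) : d * ‖f‖ ≤ ‖schrodinger W f - e • f‖ := by
  rw [schrodingerSpectrum_eq_spectrum] at h
  exact mul_norm_le_norm_apply_sub_smul (isSelfAdjoint_schrodinger W) h f

lemma exists_norm_schrodinger_sub_lt {e : ℝ} (he : e ∈ SchrodingerSpectrum W) {c : ℝ} (hc : 0 < c) :
    ∃ f, ‖schrodinger W f - e • f‖ < c * ‖f‖ := by
  rw [schrodingerSpectrum_eq_spectrum] at he
  by_contra! h
  exact notMem_spectrum_of_mul_norm_le (isSelfAdjoint_schrodinger W) hc h he

end Spectrum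

section Preperfect

open Ell2
open scoped RealInnerProductSpace

variable {W : ℤ →ᵇ ℝ}

lemma exists_finite_support_norm_apply_lt {T : Ell2 →L[ℝ] Ell2} {c : ℝ}
    (h : ∃ f, ‖T f‖ < c * ‖f‖) :
    ∃ f : Ell2, (∃ R : ℕ, ∀ n, f n ≠ 0 → |n| ≤ R) ∧ ‖T f‖ < c * ‖f‖ := by
  obtain ⟨f, hf⟩ := h
  have hopen : IsOpen {f : Ell2 | ‖T f‖ < c * ‖f‖} := isOpen_lt (by fun_prop) (by fun_prop)
  obtain ⟨s, hs⟩ :=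
    ((lp.hasSum_single ENNReal.ofNat_ne_top f).eventually (hopen.mem_nhds hf)).exists
  refine ⟨_, ⟨s.sup Int.natAbs, fun n hn => ?_⟩, hs⟩
  have hns : n ∈ s := by
    by_contra hns
    refine hn ?_
    rw [lp.coeFn_sum, Finset.sum_apply]
    exact Finset.sum_eq_zero fun i hi => by
      simp [lp.single_apply, show n ≠ i by rintro rfl; exact hns hi]
  rw [Int.abs_eq_natAbs]
  exact_mod_cast Finset.le_sup (f := Int.natAbs) hns

lemma norm_schrodinger_shift_le {c : ℤ} {ε : ℝ} (hε : 0 ≤ ε) (hW : ∀ n, |W (n + c) - W n| ≤ ε)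
    (e : ℝ) (f : Ell2) :
    ‖schrodinger W (shift c f) - e • shift c f‖ ≤ ‖schrodinger W f - e • f‖ + ε * ‖f‖ := by
  have hg (n : ℤ) : (schrodinger W (shift c f) - shift c (schrodinger W f)) n =
      (W n - W (n + c)) * shift c f n := by
    change schrodinger W (shift c f) n - schrodinger W f (n + c) = _
    simp only [schrodinger_apply, shift_apply, sub_add_eq_add_sub, add_right_comm n 1 c]
    ring
  have hcomm : ‖schrodinger W (shift c f) - shift c (schrodinger W f)‖ ≤ ε * ‖f‖ := by
    rw [← (shift c).norm_map f]
    refine norm_le_mul_norm hε fun n => ?_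
    rw [hg, abs_mul, abs_sub_comm]
    gcongr
    exact hW n
  calc ‖schrodinger W (shift c f) - e • shift c f‖
      = ‖shift c (schrodinger W f - e • f)
          + (schrodinger W (shift c f) - shift c (schrodinger W f))‖ := by
        rw [map_sub, map_smul]
        congr 1
        abel
    _ ≤ ‖schrodinger W f - e • f‖ + ε * ‖f‖ := by
        refine (norm_add_le _ _).trans ?_
        rw [(shift c).norm_map]
        gcongr

lemma orthonormal_shift {ι : Type*} {f : Ell2} {R : ℕ} (hf : ‖f‖ = 1)
    (hR : ∀ n, f n ≠ 0 → |n| ≤ R) {c : ι → ℤ} (hc : Pairwise fun i j => 2 * R < |c i - c j|) :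
    Orthonormal ℝ fun i => shift (c i) f := by
  refine ⟨fun i => by rw [LinearIsometry.norm_map, hf], fun i j hij => ?_⟩
  refine (Ell2.hasSum_inner _ _).unique ?_
  convert hasSum_zero with n
  simp only [shift_apply]
  by_contra h
  have h1 := hR _ (left_ne_zero_of_mul h)
  have h2 := hR _ (right_ne_zero_of_mul h)
  have h3 := abs_sub (n + c i) (n + c j)
  have := hc hij
  rw [add_sub_add_left_eq_sub] at h3
  linarith

lemma exists_orthonormal_norm_schrodinger_le
    (hW : ∀ ε > 0, ∃ q : ℕ, 0 < q ∧ ∀ j n : ℤ, |W (n + j * q) - W n| ≤ ε)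
    {e : ℝ} (he : e ∈ SchrodingerSpectrum W) {δ : ℝ} (hδ : 0 < δ) (m : ℕ) :
    ∃ G : Fin m → Ell2, Orthonormal ℝ G ∧ ∀ i, ‖schrodinger W (G i) - e • G i‖ ≤ δ := by
  obtain ⟨f, ⟨R, hR⟩, hf⟩ := exists_finite_support_norm_apply_lt
    (T := schrodinger W - e • 1) (exists_norm_schrodinger_sub_lt he (half_pos hδ))
  obtain ⟨q, hq, hWq⟩ := hW (δ / 2) (half_pos hδ)
  have hf0 : 0 < ‖f‖ := by
    by_contra! h
    rw [le_antisymm h (norm_nonneg f), mul_zero] at hf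
    exact (norm_nonneg _).not_gt hf
  have hunit : ‖‖f‖⁻¹ • f‖ = 1 := norm_smul_inv_norm (norm_pos_iff.1 hf0)
  refine ⟨fun i => shift ((i : ℕ) * (2 * R + 1) * q) (‖f‖⁻¹ • f),
    orthonormal_shift (R := R) hunit (fun n hn => hR n ?_) fun i j hij => ?_, fun i => ?_⟩
  · exact right_ne_zero_of_mul hn
  · have hij' : 1 ≤ |((i : ℕ) - (j : ℕ) : ℤ)| :=
      Int.one_le_abs (by simpa [sub_eq_zero, Fin.ext_iff] using hij)
    beta_reduce
    rw [← sub_mul, ← sub_mul, mul_assoc, abs_mul, abs_of_nonneg (a := ((2 * R + 1) * q : ℤ))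
      (by positivity)]
    have hq' : (1 : ℤ) ≤ q := by exact_mod_cast hq
    calc (2 * R : ℤ) < 1 * ((2 * R + 1) * 1) := by linarith
      _ ≤ |((i : ℕ) - (j : ℕ) : ℤ)| * ((2 * R + 1) * q) := by gcongr
  · refine (norm_schrodinger_shift_le (by positivity) (hWq _) e _).trans ?_
    rw [map_smul, smul_comm e, ← smul_sub, norm_smul, hunit, norm_inv, norm_norm]
    have : ‖f‖⁻¹ * ‖schrodinger W f - e • f‖ ≤ ‖f‖⁻¹ * (δ / 2 * ‖f‖) :=
      mul_le_mul_of_nonneg_left hf.le (by positivity)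
    rw [mul_comm (δ / 2), inv_mul_cancel_left₀ hf0.ne'] at this
    linarith

theorem preperfect_schrodingerSpectrum
    (hW : ∀ ε > 0, ∃ q : ℕ, 0 < q ∧ ∀ j n : ℤ, |W (n + j * q) - W n| ≤ ε) :
    Preperfect (SchrodingerSpectrum W) := by
  intro e he
  refine accPt_iff_nhds.2 fun U hU => ?_
  obtain ⟨r, hr, hball⟩ := Metric.mem_nhds_iff.1 hU
  obtain ⟨t, ht, ht0, htr⟩ := exists_mem_spectrum_ne_zero_of_orthonormal
    (isSelfAdjoint_sub_smul_one (isSelfAdjoint_schrodinger W) e)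
    (fun δ hδ m => exists_orthonormal_norm_schrodinger_le hW he hδ m) hr
  rw [← Algebra.algebraMap_eq_smul_one, ← spectrum.sub_singleton_eq, Set.sub_singleton,
    ← schrodingerSpectrum_eq_spectrum] at ht
  obtain ⟨s, hs, rfl⟩ := ht
  exact ⟨s, ⟨hball htr, hs⟩, sub_ne_zero.1 ht0⟩

end Preperfect

section Localization

open Ell2

variable {W V χ : ℤ →ᵇ ℝ} {α δ d e : ℝ}

lemma norm_shift_mulL_sub_le {c : ℤ} (hα : 0 ≤ α) (hδ : 0 ≤ δ) (h0 : ∀ n, 0 ≤ χ n)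
    (hχ : ∀ n, |χ (n + c) - χ n| ≤ α * (χ (n + c) + δ)) (f : Ell2) :
    ‖shift c (mulL χ f) - mulL χ (shift c f)‖ ≤ α * (‖mulL χ f‖ + δ * ‖f‖) := by
  have hpoint (n : ℤ) : |(shift c (mulL χ f) - mulL χ (shift c f)) n| ≤
      α * |shift c (mulL χ f + δ • f) n| := by
    have hleft : (shift c (mulL χ f) - mulL χ (shift c f)) n =
        (χ (n + c) - χ n) * f (n + c) := (sub_mul _ _ _).symm
    have hright : shift c (mulL χ f + δ • f) n = (χ (n + c) + δ) * f (n + c) :=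
      (add_mul _ _ _).symm
    rw [hleft, hright, abs_mul, abs_mul, ← mul_assoc, abs_of_nonneg (add_nonneg (h0 _) hδ)]
    gcongr
    exact hχ n
  refine (norm_le_mul_norm hα hpoint).trans ?_
  rw [LinearIsometry.norm_map]
  gcongr
  refine (norm_add_le _ _).trans_eq ?_
  rw [norm_smul, Real.norm_of_nonneg hδ]

lemma norm_schrodinger_mulL_sub_le (hα : 0 ≤ α) (hδ : 0 ≤ δ) (h0 : ∀ n, 0 ≤ χ n)
    (hχ : ∀ m n, |m - n| ≤ 1 → |χ m - χ n| ≤ α * (χ n + δ)) (f : Ell2) :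
    ‖schrodinger W (mulL χ f) - mulL χ (schrodinger W f)‖ ≤
      2 * α * (‖mulL χ f‖ + δ * ‖f‖) := by
  have hsplit : schrodinger W (mulL χ f) - mulL χ (schrodinger W f) =
      (shift (-1) (mulL χ f) - mulL χ (shift (-1) f)) +
        (shift 1 (mulL χ f) - mulL χ (shift 1 f)) := by
    have hcomm : mulL W (mulL χ f) = mulL χ (mulL W f) :=
      lp.ext <| funext fun n => mul_left_comm _ _ _
    simp only [schrodinger, _root_.add_apply, map_add, hcomm,
      LinearIsometry.coe_toContinuousLinearMap]
    abel
  have hshift (c : ℤ) (hc : |c| ≤ 1) := norm_shift_mulL_sub_le (c := c) hα hδ h0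
    (fun n => by rw [abs_sub_comm]; exact hχ _ _ (by simpa using hc)) f
  rw [hsplit]
  refine (norm_add_le _ _).trans ?_
  linarith [hshift (-1) (by simp), hshift 1 (by simp)]

lemma norm_schrodinger_mulL_sub_smul_le (hα : 0 ≤ α) (hδ : 0 ≤ δ) (h01 : ∀ n, 0 ≤ χ n ∧ χ n ≤ 1)
    (hχ : ∀ m n, |m - n| ≤ 1 → |χ m - χ n| ≤ α * (χ n + δ)) (e : ℝ) (f : Ell2) :
    ‖schrodinger W (mulL χ f) - e • mulL χ f‖ ≤
      ‖schrodinger W f - e • f‖ + 2 * α * (‖mulL χ f‖ + δ * ‖f‖) := by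
  have hsplit : schrodinger W (mulL χ f) - e • mulL χ f = mulL χ (schrodinger W f - e • f) +
      (schrodinger W (mulL χ f) - mulL χ (schrodinger W f)) := by
    rw [map_sub, map_smul]; abel
  have hmul : ‖mulL χ (schrodinger W f - e • f)‖ ≤ 1 * ‖schrodinger W f - e • f‖ :=
    norm_le_mul_norm zero_le_one fun n => by
      rw [mulL_apply, abs_mul, abs_of_nonneg (h01 n).1]
      gcongr
      exact (h01 n).2
  rw [hsplit]
  refine (norm_add_le _ _).trans ?_
  linarith [norm_schrodinger_mulL_sub_le (W := W) hα hδ (fun n => (h01 n).1) hχ f]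

lemma sub_two_mul_norm_mulL_le (hα : 0 ≤ α) (hδ : 0 ≤ δ) (h01 : ∀ n, 0 ≤ χ n ∧ χ n ≤ 1)
    (hχ : ∀ m n, |m - n| ≤ 1 → |χ m - χ n| ≤ α * (χ n + δ)) (hWV : ∀ n, χ n ≠ 0 → W n = V n)
    (hd : ∀ t ∈ SchrodingerSpectrum V, d ≤ dist e t) (f : Ell2) :
    (d - 2 * α) * ‖mulL χ f‖ ≤ ‖schrodinger W f - e • f‖ + 2 * α * δ * ‖f‖ := by
  have hcongr : schrodinger V (mulL χ f) = schrodinger W (mulL χ f) :=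
    lp.ext <| funext fun n => by
      rw [schrodinger_apply, schrodinger_apply, mulL_apply _ _ n]
      by_cases hn : χ n = 0
      · simp [hn]
      · rw [hWV n hn]
  have hgap := mul_norm_le_norm_schrodinger_sub hd (mulL χ f)
  rw [hcongr] at hgap
  linarith [norm_schrodinger_mulL_sub_smul_le (W := W) hα hδ h01 hχ e f]

end Localization

section Cutoff

variable {C : Set ℤ} {α δ : ℝ}

/-- The exponential weight `(1 + α) ^ (-dist(n, C))`. -/
def expWeight (C : Set ℤ) (α : ℝ) (n : ℤ) : ℝ := (1 + α) ^ (-Metric.infDist n C)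

lemma expWeight_le_one (hα : 0 ≤ α) (n : ℤ) : expWeight C α n ≤ 1 :=
  Real.rpow_le_one_of_one_le_of_nonpos (by linarith) (neg_nonpos.2 Metric.infDist_nonneg)

lemma expWeight_eq_one {n : ℤ} (hn : n ∈ C) : expWeight C α n = 1 := by
  rw [expWeight, Metric.infDist_zero_of_mem hn, neg_zero, Real.rpow_zero]

lemma expWeight_le (hC : C.Nonempty) (hα : 0 ≤ α) {M : ℕ} {n : ℤ} (hn : ∀ c ∈ C, M ≤ |n - c|) :
    expWeight C α n ≤ ((1 + α) ^ M)⁻¹ := by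
  rw [← Real.rpow_natCast, ← Real.rpow_neg (by linarith)]
  refine Real.rpow_le_rpow_of_exponent_le (by linarith) (neg_le_neg ?_)
  refine (Metric.le_infDist hC).2 fun c hc => ?_
  rw [Int.dist_eq]
  exact_mod_cast hn c hc

lemma expWeight_le_mul_expWeight (hα : 0 ≤ α) {m n : ℤ} (hmn : |m - n| ≤ 1) :
    expWeight C α m ≤ (1 + α) * expWeight C α n := by
  have hdist : Metric.infDist n C ≤ Metric.infDist m C + 1 :=
    Metric.infDist_le_infDist_add_dist.trans (by
      gcongr; rw [dist_comm, Int.dist_eq]; exact_mod_cast hmn)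
  calc expWeight C α m ≤ (1 + α) ^ (1 + -Metric.infDist n C) :=
        Real.rpow_le_rpow_of_exponent_le (by linarith) (by linarith)
    _ = (1 + α) * expWeight C α n := by rw [Real.rpow_add (by linarith), Real.rpow_one, expWeight]

lemma abs_sub_le_mul_of_le_one_add_mul {a b : ℝ} (hα : 0 ≤ α) (hab : a ≤ (1 + α) * b)
    (hba : b ≤ (1 + α) * a) : |a - b| ≤ α * b := by
  refine abs_le.2 ⟨?_, by linarith⟩
  rcases le_total a b with h | h <;> nlinarith

lemma exists_cutoff (hC : C.Nonempty) (hα : 0 ≤ α) (hδ : 0 ≤ δ) {M : ℕ}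
    (hM : 1 + δ ≤ δ * (1 + α) ^ M) :
    ∃ χ : ℤ →ᵇ ℝ, (∀ n, 0 ≤ χ n ∧ χ n ≤ 1) ∧ (∀ n ∈ C, χ n = 1) ∧
      (∀ n, χ n ≠ 0 → ∃ c ∈ C, |n - c| < M) ∧
      ∀ m n, |m - n| ≤ 1 → |χ m - χ n| ≤ α * (χ n + δ) := by
  let u (n : ℤ) : ℝ := max ((1 + δ) * expWeight C α n) δ
  have hu (n) : 0 ≤ u n - δ ∧ u n - δ ≤ 1 := by
    refine ⟨sub_nonneg.2 (le_max_right _ _), sub_le_iff_le_add.2 (max_le ?_ (by linarith))⟩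
    exact mul_le_of_le_one_right (by positivity) (expWeight_le_one hα n)
  have hu_step {m n : ℤ} (hmn : |m - n| ≤ 1) : u m ≤ (1 + α) * u n := by
    have h := expWeight_le_mul_expWeight (C := C) hα hmn
    refine max_le ?_ ?_
    · calc (1 + δ) * expWeight C α m ≤ (1 + δ) * ((1 + α) * expWeight C α n) := by gcongr
        _ = (1 + α) * ((1 + δ) * expWeight C α n) := by ring
        _ ≤ (1 + α) * u n := by gcongr; exact le_max_left _ _
    · exact (le_max_right _ δ).trans (le_mul_of_one_le_left (by linarith [hu n]) (by linarith))
  refine ⟨.ofNormedAddCommGroupDiscrete (fun n => u n - δ) 1 fun n => ?_, hu, fun n hn => ?_,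
    fun n hn => ?_, fun m n hmn => ?_⟩
  · rw [Real.norm_of_nonneg (hu n).1]
    exact (hu n).2
  · simp [u, expWeight_eq_one hn]
  · contrapose! hn
    refine sub_eq_zero.2 (max_eq_right ?_)
    calc (1 + δ) * expWeight C α n ≤ (1 + δ) * ((1 + α) ^ M)⁻¹ := by
          gcongr; exact expWeight_le hC hα hn
      _ ≤ δ * (1 + α) ^ M * ((1 + α) ^ M)⁻¹ := by gcongr
      _ = δ := mul_inv_cancel_right₀ (by positivity) _
  · change |u m - δ - (u n - δ)| ≤ α * (u n - δ + δ)
    rw [sub_sub_sub_cancel_right, sub_add_cancel]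
    exact abs_sub_le_mul_of_le_one_add_mul hα (hu_step hmn) (hu_step (by rwa [abs_sub_comm]))

end Cutoff

section Dirichlet

open Ell2
open scoped RealInnerProductSpace

lemma hasSum_sum_fin_add_mul {α : Type*} [AddCommMonoid α] [TopologicalSpace α] [ContinuousAdd α]
    [RegularSpace α] {u : ℤ → α} {a : α} (hu : HasSum u a) (c : ℤ) {p : ℕ} (hp : 0 < p) :
    HasSum (fun b : ℤ => ∑ i : Fin p, u (c + b * p + (i : ℕ))) a := by
  have : NeZero p := ⟨hp.ne'⟩
  have hblocks : HasSum (fun x : ℤ × Fin p => u (c + x.1 * p + (x.2 : ℕ))) a := by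
    convert ((Int.divModEquiv p).symm.trans (Equiv.addLeft c)).hasSum_iff.2 hu using 2 with x
    simp [Int.divModEquiv_symm_apply, add_assoc]
  exact hblocks.prod_fiberwise fun b => hasSum_fintype _

lemma exists_finset_mul_norm_le {E : Type*} [NormedAddCommGroup E] [InnerProductSpace ℝ E]
    [FiniteDimensional ℝ E] {A : E →L[ℝ] E} (hA : IsSelfAdjoint A) :
    ∃ Λ : Finset ℝ, Λ.card ≤ Module.finrank ℝ E ∧
      ∀ η e, (∀ t ∈ Λ, η ≤ dist e t) → ∀ x, η * ‖x‖ ≤ ‖A x - e • x‖ := by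
  have : CompleteSpace E := FiniteDimensional.complete ℝ E
  refine ⟨A.toLinearMap.charpoly.roots.toFinset, ?_, fun η e h =>
    mul_norm_le_norm_apply_sub_smul hA fun t ht => h t ?_⟩
  · exact (Multiset.toFinset_card_le _).trans <| (Polynomial.card_roots' _).trans_eq <|
      LinearMap.charpoly_natDegree _
  · have heq := AlgEquiv.spectrum_eq (Module.End.toContinuousLinearMap E) A.toLinearMap
    have ht' : t ∈ spectrum ℝ A.toLinearMap := heq ▸ ht
    rw [Multiset.mem_toFinset, Polynomial.mem_roots (LinearMap.charpoly_monic _).ne_zero]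
    exact (Module.End.mem_spectrum_iff_isRoot_charpoly _ _).1 ht'

namespace Ell2

/-- Restriction of a sequence to the interval `{c, …, c + q - 1}`. -/
def restrict (c : ℤ) (q : ℕ) : Ell2 →L[ℝ] EuclideanSpace ℝ (Fin q) :=
  ((EuclideanSpace.equiv (Fin q) ℝ).symm : (Fin q → ℝ) →L[ℝ] EuclideanSpace ℝ (Fin q)) ∘L
    .pi fun i => lp.evalCLM ℝ (fun _ : ℤ => ℝ) 2 (c + (i : ℕ))

lemma restrict_apply (c : ℤ) (q : ℕ) (f : Ell2) (i : Fin q) :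
    restrict c q f i = f (c + (i : ℕ)) := rfl

lemma adjoint_restrict_restrict_apply (c : ℤ) (q : ℕ) (f : Ell2) (n : ℤ) :
    (restrict c q).adjoint (restrict c q f) n = if n ∈ Ico c (c + q) then f n else 0 := by
  have hsum (g : Ell2) : ⟪(restrict c q).adjoint (restrict c q f), g⟫ =
      ∑ i : Fin q, f (c + (i : ℕ)) * g (c + (i : ℕ)) := by
    simp [ContinuousLinearMap.adjoint_inner_left, PiLp.inner_apply, restrict_apply, mul_comm]
  have hsingle := hsum (lp.single 2 n 1)
  rw [lp.inner_single_right] at hsingle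
  simp only [RCLike.inner_apply, conj_trivial, one_mul] at hsingle
  rw [hsingle]
  split_ifs with hn
  · obtain ⟨h1, h2⟩ := hn
    rw [Finset.sum_eq_single ⟨(n - c).toNat, by omega⟩]
    · simp [h1]
    · intro i _ hi
      have : c + (i : ℕ) ≠ n := fun h => hi (by ext; simp; omega)
      simp [lp.single_apply, this]
    · simp
  · refine Finset.sum_eq_zero fun i _ => ?_
    have : c + (i : ℕ) ≠ n := fun h => hn ⟨by omega, by omega⟩
    simp [lp.single_apply, this]

lemma restrict_schrodinger_adjoint_restrict {W : ℤ →ᵇ ℝ} {c : ℤ} {q : ℕ} {f : Ell2}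
    (hleft : f (c - 1) = 0) (hright : f (c + q) = 0) :
    restrict c q (schrodinger W ((restrict c q).adjoint (restrict c q f))) =
      restrict c q (schrodinger W f) := by
  have hsite {n : ℤ} (hn : n ∈ Icc (c - 1) (c + q)) :
      (restrict c q).adjoint (restrict c q f) n = f n := by
    rw [adjoint_restrict_restrict_apply]
    split_ifs with h
    · rfl
    · obtain rfl | rfl : n = c - 1 ∨ n = c + q := by
        simp only [mem_Icc, mem_Ico, not_and, not_lt] at hn h; omega
      exacts [hleft.symm, hright.symm]
  ext i
  have hi := i.2
  rw [restrict_apply, restrict_apply, schrodinger_apply, schrodinger_apply,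
    hsite, hsite, hsite] <;> constructor <;> omega

lemma hasSum_sq_norm_restrict_shift (f : Ell2) (c : ℤ) {p : ℕ} (hp : 0 < p) :
    HasSum (fun b : ℤ => ‖restrict c p (shift (b * p) f)‖ ^ 2) (‖f‖ ^ 2) := by
  convert hasSum_sum_fin_add_mul (hasSum_sq f) c hp using 2 with b
  simp [EuclideanSpace.norm_sq_eq, restrict_apply, shift_apply, add_right_comm]

lemma sq_norm_restrict_succ (f : Ell2) (c : ℤ) (q : ℕ) :
    ‖restrict c (q + 1) f‖ ^ 2 = f c ^ 2 + ‖restrict (c + 1) q f‖ ^ 2 := by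
  simp [EuclideanSpace.norm_sq_eq, restrict_apply, Fin.sum_univ_succ, add_assoc,
    add_comm (1 : ℤ)]

lemma schrodinger_shift {W : ℤ →ᵇ ℝ} {c : ℤ} (hW : ∀ n, W (n + c) = W n) (f : Ell2) :
    schrodinger W (shift c f) = shift c (schrodinger W f) := by
  ext n
  simp only [schrodinger_apply, shift_apply, hW, sub_add_eq_add_sub, add_right_comm n 1 c]

end Ell2

/-- The eigenvalues of the restriction of `H_W` to one period with Dirichlet conditions control
`H_W` on all sequences vanishing on `c + pℤ`, since these decouple into translates of a period. -/
lemma exists_finset_mul_norm_le_schrodinger_sub {W : ℤ →ᵇ ℝ} {p : ℕ} (hp : 0 < p)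
    (hper : ∀ n, W (n + p) = W n) (c : ℤ) :
    ∃ Λ : Finset ℝ, Λ.card ≤ p ∧ ∀ η e, 0 ≤ η → (∀ t ∈ Λ, η ≤ dist e t) →
      ∀ g : Ell2, (∀ b : ℤ, g (c + b * p) = 0) → η * ‖g‖ ≤ ‖schrodinger W g - e • g‖ := by
  obtain ⟨q, rfl⟩ := Nat.exists_eq_add_one.2 hp
  have hA := (isSelfAdjoint_schrodinger W).conj_adjoint (restrict (c + 1) q)
  obtain ⟨Λ, hcard, hΛ⟩ := exists_finset_mul_norm_le hA
  refine ⟨Λ, hcard.trans (by simp), fun η e hη he g hg => ?_⟩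
  set ψ := schrodinger W g - e • g
  have hshift (b : ℤ) : shift (b * (q + 1 : ℕ)) ψ = schrodinger W (shift (b * (q + 1 : ℕ)) g) -
      e • shift (b * (q + 1 : ℕ)) g := by
    have hW : ∀ n, W (n + b * (q + 1 : ℕ)) = W n := Function.Periodic.int_mul hper b
    rw [schrodinger_shift hW, ← map_smul, ← map_sub]
  have hblock (b : ℤ) : η ^ 2 * ‖restrict c (q + 1) (shift (b * (q + 1 : ℕ)) g)‖ ^ 2 ≤
      ‖restrict c (q + 1) (shift (b * (q + 1 : ℕ)) ψ)‖ ^ 2 := by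
    have hc : shift (b * (q + 1 : ℕ)) g c = 0 := hg b
    have hright : shift (b * (q + 1 : ℕ)) g (c + 1 + q) = 0 := by
      rw [shift_apply, ← hg (b + 1)]; push_cast; ring_nf
    have h := hΛ η e he (restrict (c + 1) q (shift (b * (q + 1 : ℕ)) g))
    rw [ContinuousLinearMap.comp_apply, ContinuousLinearMap.comp_apply,
      restrict_schrodinger_adjoint_restrict (by rwa [add_sub_cancel_right]) hright, ← map_smul,
      ← map_sub, ← hshift] at h
    rw [sq_norm_restrict_succ, sq_norm_restrict_succ, hc, zero_pow two_ne_zero, zero_add, ← mul_pow]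
    exact (pow_le_pow_left₀ (by positivity) h 2).trans (le_add_of_nonneg_left (sq_nonneg _))
  refine abs_le_of_sq_le_sq' ?_ (norm_nonneg _) |>.2
  rw [mul_pow]
  exact hasSum_le hblock ((hasSum_sq_norm_restrict_shift g c hp).mul_left _)
    (hasSum_sq_norm_restrict_shift ψ c hp)

end Dirichlet

section DirichletCut

open Ell2

variable {W V χ : ℤ →ᵇ ℝ} {p M : ℕ} {c : ℤ} {d δ e : ℝ} {f : Ell2}

lemma norm_mulL_le_of_gap (hd : 0 < d) (hδ : 0 ≤ δ) (h01 : ∀ n, 0 ≤ χ n ∧ χ n ≤ 1)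
    (hχ : ∀ m n, |m - n| ≤ 1 → |χ m - χ n| ≤ d / 4 * (χ n + δ)) (hWV : ∀ n, χ n ≠ 0 → W n = V n)
    (hgap : ∀ t ∈ SchrodingerSpectrum V, d ≤ dist e t)
    (hf : ‖schrodinger W f - e • f‖ ≤ d * δ / 8 * ‖f‖) : ‖mulL χ f‖ ≤ 5 / 4 * δ * ‖f‖ := by
  have h := sub_two_mul_norm_mulL_le (by positivity) hδ h01 hχ hWV hgap f
  refine le_of_mul_le_mul_left ?_ (half_pos hd)
  linarith

lemma norm_schrodinger_sub_mulL_le (hd : 0 ≤ d) (hδ : 0 ≤ δ) (h01 : ∀ n, 0 ≤ χ n ∧ χ n ≤ 1)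
    (hχ : ∀ m n, |m - n| ≤ 1 → |χ m - χ n| ≤ d / 4 * (χ n + δ))
    (hf : ‖schrodinger W f - e • f‖ ≤ d * δ / 8 * ‖f‖) (hχf : ‖mulL χ f‖ ≤ 5 / 4 * δ * ‖f‖) :
    ‖schrodinger W (f - mulL χ f) - e • (f - mulL χ f)‖ ≤ 11 / 8 * d * δ * ‖f‖ := by
  have hcut : ‖schrodinger W (mulL χ f) - e • mulL χ f‖ ≤ 5 / 4 * d * δ * ‖f‖ :=
    calc _ ≤ ‖schrodinger W f - e • f‖ + 2 * (d / 4) * (‖mulL χ f‖ + δ * ‖f‖) :=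
          norm_schrodinger_mulL_sub_smul_le (by positivity) hδ h01 hχ e f
      _ ≤ d * δ / 8 * ‖f‖ + 2 * (d / 4) * (5 / 4 * δ * ‖f‖ + δ * ‖f‖) := by gcongr
      _ = 5 / 4 * d * δ * ‖f‖ := by ring
  rw [map_sub, smul_sub, sub_sub_sub_comm]
  refine (norm_sub_le _ _).trans ?_
  linarith

/-- Cut an approximate eigenvector `f` of `W` into its part `χ * f` near `c + pℤ`, which is small by
the Combes–Thomas estimate, and `f - χ * f`, which satisfies the Dirichlet conditions. -/
lemma exists_finset_spectrum_inter_subset_thickening (hp : 0 < p) (hper : ∀ n, W (n + p) = W n)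
    (hWV : ∀ b n : ℤ, |n - (c + b * p)| < M → W n = V n) (hd : 0 < d) (hδ : 0 < δ)
    (hδ2 : δ ≤ 1 / 2) (hM : 1 + δ ≤ δ * (1 + d / 4) ^ M) :
    ∃ Λ : Finset ℝ, Λ.card ≤ p ∧
      SchrodingerSpectrum W ∩ {e | ∀ t ∈ SchrodingerSpectrum V, d ≤ dist e t} ⊆
        Metric.thickening (4 * d * δ) (Λ : Set ℝ) := by
  obtain ⟨χ, h01, hχC, hχM, hχ⟩ :=
    exists_cutoff (range_nonempty fun b : ℤ => c + b * p) (by positivity) hδ.le hM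
  have hWχ (n : ℤ) (hn : χ n ≠ 0) : W n = V n := by
    obtain ⟨_, ⟨b, rfl⟩, hb⟩ := hχM n hn
    exact hWV b n hb
  obtain ⟨Λ, hcard, hΛ⟩ := exists_finset_mul_norm_le_schrodinger_sub hp hper c
  refine ⟨Λ, hcard, fun e ⟨he, hgap⟩ => Metric.mem_thickening_iff.2 ?_⟩
  by_contra! hfar
  obtain ⟨f, hf⟩ := exists_norm_schrodinger_sub_lt he (show 0 < d * δ / 8 by positivity)
  have hf0 : 0 < ‖f‖ := pos_of_mul_pos_right ((norm_nonneg _).trans_lt hf) (by positivity)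
  have hχf := norm_mulL_le_of_gap hd hδ.le h01 hχ hWχ hgap hf.le
  have hvanish (b : ℤ) : (f - mulL χ f) (c + b * p) = 0 := by
    change f _ - χ _ * f _ = 0
    rw [hχC _ (mem_range_self b), one_mul, sub_self]
  have hremainder : 3 / 8 * ‖f‖ ≤ ‖f - mulL χ f‖ := by
    have : 5 / 4 * δ * ‖f‖ ≤ 5 / 4 * (1 / 2) * ‖f‖ := by gcongr
    linarith [norm_sub_norm_le f (mulL χ f)]
  refine lt_irrefl (11 / 8 * (d * δ * ‖f‖)) ?_
  calc 11 / 8 * (d * δ * ‖f‖) < 12 / 8 * (d * δ * ‖f‖) := by gcongr; norm_num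
    _ = 4 * d * δ * (3 / 8 * ‖f‖) := by ring
    _ ≤ 4 * d * δ * ‖f - mulL χ f‖ := by gcongr
    _ ≤ ‖schrodinger W (f - mulL χ f) - e • (f - mulL χ f)‖ :=
      hΛ _ e (by positivity) hfar _ hvanish
    _ ≤ 11 / 8 * d * δ * ‖f‖ := norm_schrodinger_sub_mulL_le hd.le hδ.le h01 hχ hf.le hχf
    _ = 11 / 8 * (d * δ * ‖f‖) := by ring

end DirichletCut

section BlockPotential

variable {k : ℕ}

lemma agg_sub (x x' : ℤ → (Fin k → ℝ)) (n : ℤ) : agg k (x - x') n = agg k x n - agg k x' n := by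
  simp only [agg]
  split_ifs <;> simp

lemma agg_congr {x x' : ℤ → (Fin k → ℝ)} {n : ℤ} (h : x (n / k) = x' (n / k)) :
    agg k x n = agg k x' n := by
  simp only [agg, Int.fdiv_eq_ediv_of_nonneg _ (Int.natCast_nonneg k), h]

lemma abs_agg_le (x : ℤ →ᵇ (Fin k → ℝ)) (n : ℤ) : |agg k x n| ≤ ‖x‖ := by
  simp only [agg]
  split_ifs
  · exact (norm_le_pi_norm (x _) _).trans (x.norm_coe_le_norm _)
  · simp

lemma agg_add_mul {x : ℤ → (Fin k → ℝ)} {q : ℕ} (hx : ∀ n : ℤ, x (n + q) = x n) (n : ℤ) :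
    agg k x (n + (q * k : ℕ)) = agg k x n := by
  simp only [agg]
  split_ifs with hk
  · have hk' : (k : ℤ) ≠ 0 := by exact_mod_cast hk.ne'
    simp only [Int.fdiv_eq_ediv_of_nonneg _ (Int.natCast_nonneg k), Nat.cast_mul,
      Int.add_mul_ediv_right _ _ hk', Int.add_mul_emod_self_right, hx]
  · rfl

/-- The aggregated potential `y^♮` of a bounded sequence of blocks, as a bounded sequence. -/
def blockPotential (x : ℤ →ᵇ (Fin k → ℝ)) : ℤ →ᵇ ℝ :=
  .ofNormedAddCommGroupDiscrete (agg k x) ‖x‖ (abs_agg_le x)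

lemma coe_blockPotential (x : ℤ →ᵇ (Fin k → ℝ)) : ⇑(blockPotential x) = agg k x := rfl

lemma norm_blockPotential_sub_le (x x' : ℤ →ᵇ (Fin k → ℝ)) :
    ‖blockPotential x - blockPotential x'‖ ≤ ‖x - x'‖ :=
  (BoundedContinuousFunction.norm_le (norm_nonneg _)).2 fun n => by
    rw [BoundedContinuousFunction.sub_apply, coe_blockPotential, coe_blockPotential, ← agg_sub,
      ← coe_sub]
    exact abs_agg_le _ n

lemma schrodingerSpectrum_agg_subset_thickening {x x' : ℤ →ᵇ (Fin k → ℝ)} {δ : ℝ}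
    (h : dist x x' < δ) : SchrodingerSpectrum (agg k x) ⊆
      Metric.thickening δ (SchrodingerSpectrum (agg k x')) := by
  rw [dist_eq_norm] at h
  exact schrodingerSpectrum_subset_thickening ((norm_blockPotential_sub_le x x').trans_lt h)

lemma preperfect_schrodingerSpectrum_agg (hk : 0 < k) {Y : Set (Fin k → ℝ)} {y : ℤ →ᵇ (Fin k → ℝ)}
    (hy : y ∈ LPY k Y) : Preperfect (SchrodingerSpectrum (agg k y)) := by
  refine preperfect_schrodingerSpectrum (W := blockPotential y) fun ε hε => ?_
  obtain ⟨x, ⟨⟨q, hq, hper⟩, -⟩, hx⟩ := Metric.mem_closure_iff.1 hy (ε / 2) (half_pos hε)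
  rw [dist_eq_norm] at hx
  refine ⟨q * k, by positivity, fun j n => ?_⟩
  have hclose (n : ℤ) : |blockPotential y n - blockPotential x n| ≤ ε / 2 :=
    (norm_coe_le_norm (blockPotential y - blockPotential x) n).trans <|
      (norm_blockPotential_sub_le y x).trans hx.le
  have hperiodic : blockPotential x (n + j * (q * k : ℕ)) = blockPotential x n :=
    Function.Periodic.int_mul (agg_add_mul hper) j n
  calc |blockPotential y (n + j * (q * k : ℕ)) - blockPotential y n|
      ≤ |blockPotential y (n + j * (q * k : ℕ)) - blockPotential x (n + j * (q * k : ℕ))| +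
          |blockPotential x n - blockPotential y n| := by
        rw [hperiodic]; exact abs_sub_le _ _ _
    _ ≤ ε := by
        rw [abs_sub_comm (blockPotential x n)]
        linarith [hclose n, hclose (n + j * (q * k : ℕ))]

end BlockPotential

section Paste

variable {ι E : Type*} [Fintype ι] [NormedAddCommGroup E] {y : ι → ℤ →ᵇ E} {a : ℤ → ι} {L : ℤ}

/-- The sequence that agrees with `y (a b)` on the block `{b * L, …, b * L + L - 1}`. -/
def paste (y : ι → ℤ →ᵇ E) (a : ℤ → ι) (L : ℤ) : ℤ →ᵇ E :=
  .ofNormedAddCommGroupDiscrete (fun n => y (a (n / L)) n) (∑ i, ‖y i‖) fun n =>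
    ((y _).norm_coe_le_norm n).trans <|
      Finset.single_le_sum (f := fun i => ‖y i‖) (fun _ _ => norm_nonneg _) (Finset.mem_univ _)

lemma paste_apply (n : ℤ) : paste y a L n = y (a (n / L)) n := rfl

lemma dist_paste_le {x : ℤ →ᵇ E} {r : ℝ} (hyx : ∀ i, dist (y i) x ≤ r) : dist (paste y a L) x ≤ r :=
  (dist_le_iff_of_nonempty).2 fun n => (dist_coe_le_dist (f := y (a (n / L))) n).trans (hyx _)

lemma paste_add_mul {m : ℤ} (hL : L ≠ 0) (hy : ∀ i n, y i (n + L) = y i n)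
    (ha : ∀ b, a (b + m) = a b) (n : ℤ) : paste y a L (n + m * L) = paste y a L n := by
  have hym : y (a (n / L)) (n + m * L) = y (a (n / L)) n :=
    Function.Periodic.int_mul (hy (a (n / L))) m n
  rw [paste_apply, Int.add_mul_ediv_right _ _ hL, ha, hym, paste_apply]

end Paste

section PasteSpectrum

variable {ι : Type*} [Fintype ι] {k m L : ℕ} {y : ι → ℤ →ᵇ (Fin k → ℝ)} {a : ℤ → ι}

lemma blockPotential_paste {M : ℕ} (hLM : 2 * M ≤ L * k) {b n : ℤ}
    (hn : |n - (b * (L * k : ℕ) + M)| < M) :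
    blockPotential (paste y a L) n = blockPotential (y (a b)) n := by
  have hblock : n / k / L = b := by
    rw [abs_lt] at hn
    have hpos : (0 : ℤ) < (L * k : ℕ) := by omega
    rw [Int.ediv_ediv_of_nonneg (by positivity), mul_comm, ← Nat.cast_mul]
    refine (Int.ediv_eq_iff_of_pos hpos).2 ⟨by linarith, ?_⟩
    have : (2 * M : ℤ) ≤ (L * k : ℕ) := by exact_mod_cast hLM
    linarith
  refine agg_congr ?_
  rw [paste_apply, hblock]

lemma hausdorffContent_spectrum_paste_le {M : ℕ} {s d δ : ℝ} (hs : 0 ≤ s) (hd : 0 < d) (hδ : 0 < δ)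
    (hδ2 : δ ≤ 1 / 2) (hM : 1 + δ ≤ δ * (1 + d / 4) ^ M) (hk : 0 < k) (hm : 0 < m) (hL : 0 < L)
    (hLM : 2 * M ≤ L * k) (hy : ∀ i (n : ℤ), y i (n + L) = y i n) (ha : ∀ b : ℤ, a (b + m) = a b)
    (hsurj : Function.Surjective a) :
    hausdorffContent s (SchrodingerSpectrum (agg k (paste y a L)) ∩
        {e | ∃ i, ∀ t ∈ SchrodingerSpectrum (agg k (y i)), d ≤ dist e t}) ≤
      Fintype.card ι * ((m * L * k : ℕ) * (2 * ENNReal.ofReal (4 * d * δ)) ^ s) := by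
  have hper (n : ℤ) : blockPotential (paste y a L) (n + (m * L * k : ℕ)) =
      blockPotential (paste y a L) n :=
    agg_add_mul (q := m * L) (fun n => by
      rw [Nat.cast_mul]; exact paste_add_mul (by positivity) hy ha n) n
  have hsingle (i : ι) : hausdorffContent s (SchrodingerSpectrum (agg k (paste y a L)) ∩
      {e | ∀ t ∈ SchrodingerSpectrum (agg k (y i)), d ≤ dist e t}) ≤
        (m * L * k : ℕ) * (2 * ENNReal.ofReal (4 * d * δ)) ^ s := by
    obtain ⟨b₀, rfl⟩ := hsurj i
    obtain ⟨Λ, hcard, hΛ⟩ := exists_finset_spectrum_inter_subset_thickening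
      (V := blockPotential (y (a b₀))) (c := b₀ * (L * k : ℕ) + M) (by positivity) hper
      (fun b n hn => by
        have hab : a (b₀ + b * m) = a b₀ := Function.Periodic.int_mul ha b b₀
        rw [← hab]
        refine blockPotential_paste hLM ?_
        convert hn using 3
        push_cast
        ring) hd hδ hδ2 hM
    refine (measure_mono hΛ).trans ((hausdorffContent_thickening_finset_le hs Λ _).trans ?_)
    gcongr
  have hunion : SchrodingerSpectrum (agg k (paste y a L)) ∩
        {e | ∃ i, ∀ t ∈ SchrodingerSpectrum (agg k (y i)), d ≤ dist e t} ⊆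
      ⋃ i, SchrodingerSpectrum (agg k (paste y a L)) ∩
        {e | ∀ t ∈ SchrodingerSpectrum (agg k (y i)), d ≤ dist e t} :=
    fun e ⟨he, i, hi⟩ => mem_iUnion.2 ⟨i, he, hi⟩
  refine (measure_mono hunion).trans <| (measure_iUnion_fintype_le _ _).trans ?_
  exact (Finset.sum_le_card_nsmul _ _ _ fun i _ => hsingle i).trans_eq (nsmul_eq_mul _ _)

end PasteSpectrum

section PasteLimit

open Filter Topology
open scoped ENNReal

variable {ι : Type*}

lemma exists_surjective_periodic [Fintype ι] [Nonempty ι] :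
    ∃ a : ℤ → ι, Function.Surjective a ∧ Function.Periodic a (Fintype.card ι) := by
  have : NeZero (Fintype.card ι) := ⟨Fintype.card_ne_zero⟩
  let φ : ZMod (Fintype.card ι) ≃ ι := Fintype.equivOfCardEq (ZMod.card _)
  exact ⟨fun b => φ b, φ.surjective.comp ZMod.intCast_surjective, fun b => by simp⟩

lemma exists_common_period [Finite ι] {α : Type*} [PseudoMetricSpace α] {y : ι → ℤ →ᵇ α}
    (hy : ∀ i, IsPeriodicSeq (y i)) :
    ∃ Q : ℕ, 0 < Q ∧ ∀ i, Function.Periodic (y i) (Q : ℤ) := by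
  have := Fintype.ofFinite ι
  choose q hq hper using hy
  refine ⟨∏ i, q i, Finset.prod_pos fun i _ => hq i, fun i => ?_⟩
  obtain ⟨l, hl⟩ := Finset.dvd_prod_of_mem q (Finset.mem_univ i)
  rw [hl, mul_comm, Nat.cast_mul]
  exact Function.Periodic.nat_mul (hper i) l

lemma tendsto_mul_ofReal_pow_rpow {θ s : ℝ} (hθ0 : 0 ≤ θ) (hθ : θ < 1) (hs : 0 < s) {D : ℝ}
    (hD : 0 ≤ D) (A B : ℕ) :
    Tendsto (fun M : ℕ => (A : ℝ≥0∞) * ((B * (2 * M + 1) : ℕ) * (ENNReal.ofReal (D * θ ^ M)) ^ s))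
      atTop (𝓝 0) := by
  have hreal : Tendsto (fun M : ℕ => A * (B * ((2 * (M * (θ ^ s) ^ M) + (θ ^ s) ^ M) * D ^ s)))
      atTop (𝓝 (A * (B * ((2 * 0 + 0) * D ^ s)))) := by
    have hθs : θ ^ s < 1 := Real.rpow_lt_one hθ0 hθ hs
    have hθs0 : 0 ≤ θ ^ s := Real.rpow_nonneg hθ0 s
    exact ((((tendsto_self_mul_const_pow_of_lt_one hθs0 hθs).const_mul 2).add
      (tendsto_pow_atTop_nhds_zero_of_lt_one hθs0 hθs)).mul_const _).const_mul _ |>.const_mul _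
  have h := ENNReal.tendsto_ofReal hreal
  simp only [mul_zero, add_zero, zero_mul, ENNReal.ofReal_zero] at h
  refine h.congr fun M => ?_
  rw [ENNReal.ofReal_rpow_of_nonneg (by positivity) hs.le, ← ENNReal.ofReal_natCast,
    ← ENNReal.ofReal_natCast, ← ENNReal.ofReal_mul (by positivity),
    ← ENNReal.ofReal_mul (by positivity), Real.mul_rpow hD (by positivity),
    ← Real.rpow_pow_comm hθ0]
  push_cast
  ring_nf

lemma exists_cutoff_parameters {d s : ℝ} (hd : 0 < d) (hs : 0 < s) (A B : ℕ) {η : ℝ≥0∞}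
    (hη : 0 < η) :
    ∃ (M : ℕ) (δ : ℝ), 0 < δ ∧ δ ≤ 1 / 2 ∧ 1 + δ ≤ δ * (1 + d / 4) ^ M ∧
      A * ((B * (2 * M + 1) : ℕ) * (2 * ENNReal.ofReal (4 * d * δ)) ^ s) < η := by
  let θ := (1 + d / 4)⁻¹
  have hθ0 : 0 < θ := by positivity
  have hθ1 : θ < 1 := inv_lt_one_of_one_lt₀ (by linarith)
  obtain ⟨M, hMη, hM⟩ := ((tendsto_mul_ofReal_pow_rpow hθ0.le hθ1 hs (D := 16 * d) (by positivity)
    A B).eventually_lt_const hη |>.and <|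
    (tendsto_pow_atTop_nhds_zero_of_lt_one hθ0.le hθ1).eventually_le_const
      (show (0 : ℝ) < 1 / 4 by norm_num)).exists
  refine ⟨M, 2 * θ ^ M, by positivity, by linarith, ?_, ?_⟩
  · have hinv : θ ^ M * (1 + d / 4) ^ M = 1 := by
      rw [← mul_pow, inv_mul_cancel₀ (by positivity), one_pow]
    rw [mul_assoc, hinv]
    linarith
  · have hradius : 2 * (4 * d * (2 * θ ^ M)) = 16 * d * θ ^ M := by ring
    rwa [← ENNReal.ofReal_ofNat 2, ← ENNReal.ofReal_mul zero_le_two, hradius]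

theorem exists_mem_perY_hausdorffContent_lt [Finite ι] [Nonempty ι] {k : ℕ} (hk : 0 < k)
    {Y : Set (Fin k → ℝ)} {y : ι → ℤ →ᵇ (Fin k → ℝ)} (hy : ∀ i, y i ∈ PerY k Y)
    {x : ℤ →ᵇ (Fin k → ℝ)} {r : ℝ} (hyx : ∀ i, dist (y i) x ≤ r) {s d : ℝ} {η : ℝ≥0∞}
    (hs : 0 < s) (hd : 0 < d) (hη : 0 < η) :
    ∃ z ∈ PerY k Y, dist z x ≤ r ∧ hausdorffContent s (SchrodingerSpectrum (agg k z) ∩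
      {e | ∃ i, ∀ t ∈ SchrodingerSpectrum (agg k (y i)), d ≤ dist e t}) < η := by
  have := Fintype.ofFinite ι
  obtain ⟨a, hsurj, ha⟩ := exists_surjective_periodic (ι := ι)
  obtain ⟨Q, hQ, hper⟩ := exists_common_period fun i => (hy i).1
  set m := Fintype.card ι
  have hm : 0 < m := Fintype.card_pos
  obtain ⟨M, δ, hδ, hδ2, hδM, hMη⟩ := exists_cutoff_parameters hd hs m (m * Q * k) hη
  set L := Q * (2 * M + 1) with hL
  have hL0 : 0 < L := by positivity
  have hLM : 2 * M ≤ L * k :=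
    calc 2 * M ≤ 1 * (2 * M + 1) * 1 := by omega
      _ ≤ Q * (2 * M + 1) * k := by gcongr <;> assumption
  have hperL (i : ι) (n : ℤ) : y i (n + L) = y i n := by
    rw [hL, mul_comm, Nat.cast_mul]
    exact Function.Periodic.nat_mul (hper i) _ n
  refine ⟨paste y a L, ⟨⟨m * L, by positivity, fun n => ?_⟩, fun n => (hy _).2 n⟩,
    dist_paste_le hyx, ?_⟩
  · rw [Nat.cast_mul]
    exact paste_add_mul (by positivity) hperL ha n
  · refine (hausdorffContent_spectrum_paste_le hs.le hd hδ hδ2 hδM hk hm hL0 hLM hperL ha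
      hsurj).trans_lt ?_
    rwa [hL, ← mul_assoc m, mul_right_comm (m * Q)]

end PasteLimit

section Generic

open Filter Topology
open scoped ENNReal

variable {k : ℕ} {Y : Set (Fin k → ℝ)} {S : Set ℝ} {s : ℝ} {η : ℝ≥0∞}

lemma exists_finset_forall_le_dist {X α : Type*} [PseudoMetricSpace X] {K : Set X}
    (hK : IsCompact K) {F : α → Set X} (hF : ∀ i, IsClosed (F i)) (h : ∀ e ∈ K, ∃ i, e ∉ F i) :
    ∃ T : Finset α, ∃ d > 0, ∀ e ∈ K, ∃ i ∈ T, ∀ t ∈ F i, d ≤ dist e t := by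
  classical
  refine hK.induction_on (p := fun K => ∃ T : Finset α, ∃ d > 0, ∀ e ∈ K, ∃ i ∈ T, ∀ t ∈ F i,
    d ≤ dist e t) ⟨∅, 1, one_pos, by simp⟩ ?_ ?_ fun e he => ?_
  · rintro K K' hKK' ⟨T, d, hd, hT⟩
    exact ⟨T, d, hd, fun e he => hT e (hKK' he)⟩
  · rintro K K' ⟨T, d, hd, hT⟩ ⟨T', d', hd', hT'⟩
    refine ⟨T ∪ T', min d d', lt_min hd hd', ?_⟩
    rintro e (he | he)
    · obtain ⟨i, hi, hgap⟩ := hT e he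
      exact ⟨i, Finset.mem_union_left _ hi, fun t ht => (min_le_left _ _).trans (hgap t ht)⟩
    · obtain ⟨i, hi, hgap⟩ := hT' e he
      exact ⟨i, Finset.mem_union_right _ hi, fun t ht => (min_le_right _ _).trans (hgap t ht)⟩
  · obtain ⟨i, hi⟩ := h e he
    obtain ⟨ε, hε, hball⟩ := Metric.isOpen_iff.1 (hF i).isOpen_compl e hi
    refine ⟨_, mem_nhdsWithin_of_mem_nhds (Metric.ball_mem_nhds e (half_pos hε)),
      {i}, ε / 2, half_pos hε, fun e' he' => ⟨i, Finset.mem_singleton_self i, fun t ht => ?_⟩⟩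
    have het : ε ≤ dist t e := not_lt.1 fun hlt => hball hlt ht
    rw [Metric.mem_ball] at he'
    linarith [dist_triangle t e' e, dist_comm t e']

theorem exists_mem_perY_hausdorffContent_spectrum_lt (hk : 0 < k) (hS : dimH S = 0)
    (hgap : ∀ E ∉ S, PerY k Y ⊆ closure {y ∈ PerY k Y | E ∉ SchrodingerSpectrum (agg k y)})
    {x : ℤ →ᵇ (Fin k → ℝ)} (hx : x ∈ PerY k Y) {r : ℝ} (hr : 0 < r) (hs : 0 < s) (hη : 0 < η) :
    ∃ z ∈ PerY k Y, dist z x ≤ r ∧ hausdorffContent s (SchrodingerSpectrum (agg k z)) < η := by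
  classical
  have hη2 : 0 < η / 2 := ENNReal.half_pos hη.ne'
  obtain ⟨V, hV, hSV, hVη⟩ := exists_isOpen_hausdorffContent_lt hs.le
    ((hausdorffContent_eq_zero_of_dimH hS hs).trans_lt hη2)
  let near := {y : ℤ →ᵇ (Fin k → ℝ) // y ∈ PerY k Y ∧ dist y x ≤ r}
  have hK : IsCompact (Metric.cthickening (2 * r) (SchrodingerSpectrum (agg k x)) \ V) :=
    (isCompact_schrodingerSpectrum (blockPotential x)).cthickening.diff hV
  obtain ⟨T, d, hd, hT⟩ := exists_finset_forall_le_dist hK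
    (F := fun y : near => SchrodingerSpectrum (agg k y))
    (fun y => (isCompact_schrodingerSpectrum (blockPotential y.1)).isClosed) fun e he => by
      obtain ⟨y, ⟨hyY, hey⟩, hy⟩ :=
        Metric.mem_closure_iff.1 (hgap e (fun heS => he.2 (hSV heS)) hx) r hr
      exact ⟨⟨y, hyY, dist_comm x y ▸ hy.le⟩, hey⟩
  let base : near := ⟨x, hx, by simpa using hr.le⟩
  have : Nonempty ↥(insert base T) := ⟨⟨base, Finset.mem_insert_self _ _⟩⟩
  let family : ↥(insert base T) → ℤ →ᵇ (Fin k → ℝ) := fun y => y.1.1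
  obtain ⟨z, hzY, hzx, hz⟩ := exists_mem_perY_hausdorffContent_lt hk (y := family)
    (fun y => y.1.2.1) (fun y => y.1.2.2) hs hd hη2
  refine ⟨z, hzY, hzx, ?_⟩
  have hcover : SchrodingerSpectrum (agg k z) ⊆ V ∪ (SchrodingerSpectrum (agg k z) ∩
      {e | ∃ i, ∀ t ∈ SchrodingerSpectrum (agg k (family i)), d ≤ dist e t}) := by
    intro e he
    by_cases heV : e ∈ V
    · exact .inl heV
    · obtain ⟨y, hy, hgap⟩ := hT e ⟨Metric.thickening_subset_cthickening _ _
        (schrodingerSpectrum_agg_subset_thickening (hzx.trans_lt (by linarith)) he), heV⟩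
      exact .inr ⟨he, ⟨y, Finset.mem_insert_of_mem hy⟩, hgap⟩
  calc hausdorffContent s (SchrodingerSpectrum (agg k z))
      ≤ hausdorffContent s V + hausdorffContent s _ :=
        (measure_mono hcover).trans (measure_union_le _ _)
    _ < η / 2 + η / 2 := ENNReal.add_lt_add hVη hz
    _ = η := ENNReal.add_halves η

lemma isOpen_hausdorffContent_spectrum_lt (hs : 0 ≤ s) :
    IsOpen {y : ℤ →ᵇ (Fin k → ℝ) | hausdorffContent s (SchrodingerSpectrum (agg k y)) < η} := by
  refine Metric.isOpen_iff.2 fun y hy => ?_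
  obtain ⟨U, hU, hyU, hUη⟩ := exists_isOpen_hausdorffContent_lt hs hy
  obtain ⟨δ, hδ, hthick⟩ :=
    (isCompact_schrodingerSpectrum (blockPotential y)).exists_thickening_subset_open hU hyU
  exact ⟨δ, hδ, fun y' hy' => (measure_mono
    ((schrodingerSpectrum_agg_subset_thickening hy').trans hthick)).trans_lt hUη⟩

lemma dense_hausdorffContent_spectrum_lt (hk : 0 < k) (hS : dimH S = 0)
    (hgap : ∀ E ∉ S, PerY k Y ⊆ closure {y ∈ PerY k Y | E ∉ SchrodingerSpectrum (agg k y)})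
    (hs : 0 < s) (hη : 0 < η) :
    Dense {y : LPY k Y |
      hausdorffContent s (SchrodingerSpectrum (agg k (y : ℤ →ᵇ (Fin k → ℝ)))) < η} := by
  refine Subtype.dense_iff.2 (closure_minimal (fun x hx => ?_) isClosed_closure)
  refine Metric.mem_closure_iff.2 fun ε hε => ?_
  obtain ⟨z, hz, hzx, hzη⟩ :=
    exists_mem_perY_hausdorffContent_spectrum_lt hk hS hgap hx (half_pos hε) hs hη
  refine ⟨z, ⟨⟨z, subset_closure hz⟩, hzη, rfl⟩, ?_⟩
  rw [dist_comm]
  linarith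

lemma isZeroDimCantor_schrodingerSpectrum_agg (hk : 0 < k) {y : ℤ →ᵇ (Fin k → ℝ)}
    (hy : y ∈ LPY k Y) (hdim : dimH (SchrodingerSpectrum (agg k y)) = 0) :
    IsZeroDimCantor (SchrodingerSpectrum (agg k y)) :=
  ⟨schrodingerSpectrum_nonempty (blockPotential y),
    isCompact_schrodingerSpectrum (blockPotential y), preperfect_schrodingerSpectrum_agg hk hy,
    interior_eq_empty_of_dimH_eq_zero hdim, hdim⟩

lemma IsDiscreteSet.dimH_eq_zero (hS : IsDiscreteSet S) : dimH S = 0 := by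
  refine Set.Countable.dimH_zero ?_
  have hfinite (n : ℕ) : (S ∩ Metric.closedBall 0 n).Finite := by
    by_contra hinf
    obtain ⟨x, -, hx⟩ := Set.Infinite.exists_accPt_of_subset_isCompact hinf
      (isCompact_closedBall _ _) inter_subset_right
    exact hS x (hx.mono (principal_mono.2 inter_subset_left))
  rw [← inter_univ S, ← Metric.iUnion_closedBall_nat 0, inter_iUnion]
  exact countable_iUnion fun n => (hfinite n).countable

lemma perExt_apply {α : Type*} [Zero α] {m : ℕ} (hm : 0 < m) (w : ℤ → α) (j : ℤ) :
    perExt (fun i : Fin m => w (i : ℕ)) j = w (j % m) := by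
  rw [perExt, dif_pos hm]
  simp only [Int.toNat_of_nonneg (Int.emod_nonneg j (Int.natCast_ne_zero.2 hm.ne'))]

lemma perExt_add_length {α : Type*} [Zero α] {m : ℕ} (w : Fin m → α) (j : ℤ) :
    perExt w (j + m) = perExt w j := by
  simp [perExt]

lemma exists_perExt_eq {α : Type*} [Zero α] {m : ℕ} (hm : 0 < m) (w : Fin m → α) (j : ℤ) :
    ∃ i, perExt w j = w i :=
  ⟨_, dif_pos hm⟩

lemma GapRich.perY_subset_closure (hGR : GapRich k Y S) {E : ℝ} (hE : E ∉ S) :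
    PerY k Y ⊆ closure {y ∈ PerY k Y | E ∉ SchrodingerSpectrum (agg k y)} := by
  rintro x ⟨⟨q, hq, hper⟩, hxY⟩
  refine Metric.mem_closure_iff.2 fun ε hε => ?_
  obtain ⟨l, hl, w, hwY, hdist, hEw⟩ :=
    hGR.2 E hE q hq (fun i => x (i : ℕ)) (fun i => hxY _) (ε / 2) (half_pos hε)
  have hx (j : ℤ) : perExt (fun i : Fin q => x (i : ℕ)) j = x j := by
    rw [perExt_apply hq, Int.emod_def, mul_comm]
    exact Function.Periodic.sub_int_mul_eq hper _
  let y : ℤ →ᵇ (Fin k → ℝ) := .ofNormedAddCommGroupDiscrete (perExt w) (∑ i, ‖w i‖) fun j => by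
    obtain ⟨i, hi⟩ := exists_perExt_eq hl w j
    rw [hi]
    exact Finset.single_le_sum (f := fun i => ‖w i‖) (fun _ _ => norm_nonneg _) (Finset.mem_univ i)
  refine ⟨y, ⟨⟨⟨l, hl, perExt_add_length w⟩, fun j => ?_⟩, hEw⟩, ?_⟩
  · obtain ⟨i, hi⟩ := exists_perExt_eq hl w j
    change perExt w j ∈ Y
    exact hi ▸ hwY i
  · refine lt_of_le_of_lt ((dist_le_iff_of_nonempty).2 fun j => ?_) (half_lt_self hε)
    exact hx j ▸ (hdist j).le

theorem gapRich_generic_zero_dim_cantor_general (k : ℕ) (hk : 0 < k) (Y : Set (Fin k → ℝ))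
    (S : Set ℝ) (hS : dimH S = 0)
    (hgap : ∀ E ∉ S, PerY k Y ⊆ closure {y ∈ PerY k Y | E ∉ SchrodingerSpectrum (agg k y)}) :
    ∃ R : Set (LPY k Y), IsGδ R ∧ Dense R ∧
      ∀ y ∈ R, IsZeroDimCantor (SchrodingerSpectrum (agg k ⇑(y : ℤ →ᵇ (Fin k → ℝ)))) := by
  let thin (i : ℕ × ℕ) : Set (LPY k Y) := {y |
    hausdorffContent (1 / (i.1 + 1)) (SchrodingerSpectrum (agg k (y : ℤ →ᵇ (Fin k → ℝ)))) <
      (i.2 : ℝ≥0∞)⁻¹}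
  have hopen (i) : IsOpen (thin i) :=
    (isOpen_hausdorffContent_spectrum_lt (by positivity)).preimage continuous_subtype_val
  have hdense (i) : Dense (thin i) :=
    dense_hausdorffContent_spectrum_lt hk hS hgap (by positivity) (by simp)
  have : CompleteSpace (LPY k Y) := isClosed_closure.completeSpace_coe
  refine ⟨⋂ i, thin i, .iInter_of_isOpen hopen, dense_iInter_of_isOpen hopen hdense,
    fun y hy => isZeroDimCantor_schrodingerSpectrum_agg hk y.2 ?_⟩
  refine dimH_eq_zero_of_hausdorffContent fun m => ?_
  by_contra hpos
  obtain ⟨n, hn⟩ := ENNReal.exists_inv_nat_lt hpos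
  exact (mem_iInter.1 hy (m, n)).not_gt hn

end Generic

/-- If `Y ⊆ ℝ^k` is a closed perfect gap-rich set, then for generic
`y ∈ LP(ℤ,Y)` the spectrum of `H_y` is a Cantor set of zero Hausdorff dimension. -/
theorem gapRich_generic_zero_dim_cantor (k : ℕ) (hk : 0 < k)
    (Y : Set (Fin k → ℝ)) (hY : Perfect Y) (S : Set ℝ) (hGR : GapRich k Y S) :
    ∃ R : Set (LPY k Y), IsGδ R ∧ Dense R ∧
      ∀ y ∈ R,
        IsZeroDimCantor
          (SchrodingerSpectrum (agg k ⇑(y : ℤ →ᵇ (Fin k → ℝ)))) :=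
  gapRich_generic_zero_dim_cantor_general k hk Y S hGR.1.dimH_eq_zero fun _ =>
    hGR.perY_subset_closure
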